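/- There exist universal constants c > 0, C > 0 and n₀ such that for all n ≥ n₀, r ≥ 1, and k with n·r ≤ k ≤ n²: if a randomized t-round adaptive algorithm making k exact linear measurements per round is such that for every n×n real matrix A it outputs a matrix B of rank at most r satisfying ‖A − B‖ ≤ 2·σ_{r+1}(A) with probability at least 1 − n^{−C} (over the seed), then t ≥ c·log(n²/k). -/

import Mathlib

/-!
The lower bound already holds for the planted inputs `A = G + β u vᵀ`, where `G` is a standard
Gaussian matrix, `u` and `v` are uniform sign vectors, and `β = 64 / √n`, so that the plant has
operator norm `64 √n` whereas `‖G‖ ≤ √(108 n)` with probability at least `3/4` (`gam_opNorm`).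

Upper bound on what is learned. The transcript on `a + θ`, with `a` Gaussian, has an explicit
likelihood ratio with respect to independent Gaussian responses (`QueryMaps.lintegral_resp_add`),
governed by the energy of `θ` captured by the queries. Hence, while the captured energy is at most
`s`, an event of prior probability `δ` for each fixed transcript has probability about `exp s * δ`
under the planted law (`QueryMaps.Valid.change_of_measure`). For a fixed transcript the energy of
`β u ⊗ v` exceeds a large multiple of `k / n` with exponentially small prior probability
(`QueryMaps.Valid.energy_tail`), a decoupled Hanson–Wright bound. Applied round after round, these
two facts show that the captured energy grows at most by a constant factor per round, starting from
`k / n` (`QueryMaps.Valid.energy_growth`). With `x = n² / k`, after `t < c log x` rounds it is at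
most `√x * k / n = n / √x`, a small multiple of `n`.

Lower bound on what is revealed. As `u vᵀ` has rank one, `σ_{r+1}(A) ≤ ‖G‖`, so that a correct output
`B` has `‖A - B‖ ≤ 2 ‖G‖` and satisfies `|B v|² ≥ 1024 n²`, while `rank B ≤ r` keeps `‖B‖_F²` below a
multiple of `n r` (`mem_goodSet_of_success`). A fixed such matrix is aligned with a random sign
vector with probability at most `exp (r / 2 - n / 64)` only (`avg_goodSet`), and `r ≤ k / n`, so the
two estimates are incompatible (`QueryMaps.Valid.final_bound`, `no_fast_algorithm`).

When `n² / k` is bounded, the claim reduces to `t ≥ 1` (`rounds_pos`).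
-/

open MeasureTheory ProbabilityTheory Matrix
open scoped ENNReal Classical

noncomputable section

/-- Squared Euclidean norm of a finitely-indexed real vector. -/
def sqNorm {ι : Type*} [Fintype ι] (x : ι → ℝ) : ℝ := ∑ i, x i ^ 2

/-- Squared Frobenius norm of a real matrix. -/
def frobSq {m n : Type*} [Fintype m] [Fintype n] (A : Matrix m n ℝ) : ℝ :=
  ∑ i, ∑ j, A i j ^ 2

/-- Spectral (ℓ₂ operator) norm of a real matrix. -/
def specNorm {m n : Type*} [Fintype m] [Fintype n] (A : Matrix m n ℝ) : ℝ :=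
  sSup ((fun x : n → ℝ => Real.sqrt (sqNorm (A.mulVec x))) '' {x | sqNorm x ≤ 1})

/-- `i`-th largest singular value (1-based), characterized via
`σ_i(A) = min {‖A − X‖ : rank X ≤ i − 1}`. -/
def singVal {m n : Type*} [Fintype m] [Fintype n] (A : Matrix m n ℝ) (i : ℕ) : ℝ :=
  sInf {c | ∃ X : Matrix m n ℝ, X.rank ≤ i - 1 ∧ c = specNorm (A - X)}

/-- Flattening of an `n × n` matrix into a vector in `ℝ^{n²}`. -/
def vec (n : ℕ) (A : Matrix (Fin n) (Fin n) ℝ) : Fin (n * n) → ℝ :=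
  fun i => A (finProdFinEquiv.symm i).1 (finProdFinEquiv.symm i).2

/-- `u ⊗ v = vec (u vᵀ) ∈ ℝ^{n²}`. -/
def tensor {n : ℕ} (u v : Fin n → ℝ) : Fin (n * n) → ℝ :=
  vec n (Matrix.of fun i j => u i * v j)

/-- Standard Gaussian measure on `ι → ℝ`. -/
def stdGaussian (ι : Type*) [Fintype ι] : Measure (ι → ℝ) :=
  Measure.pi fun _ => gaussianReal 0 1

/-- Standard Gaussian measure on `n × n` matrices (as `Fin n → Fin n → ℝ`). -/
def stdGaussianMat (n : ℕ) : Measure (Fin n → Fin n → ℝ) :=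
  Measure.pi fun _ => stdGaussian (Fin n)

/-- Query maps of a deterministic `t`-round adaptive algorithm making `k` linear
measurements per round on inputs in `ℝ^N`. -/
def QueryMaps (N k t : ℕ) : Type :=
  (j : Fin t) → (Fin (j : ℕ) → (Fin k → ℝ)) → Matrix (Fin k) (Fin N) ℝ

namespace QueryMaps

variable {N k t : ℕ}

/-- Restriction of a round-`j` history to the first `i` rounds. -/
def prefixHist {j : Fin t} (h : Fin (j : ℕ) → Fin k → ℝ) {i : Fin t}
    (hij : (i : ℕ) < (j : ℕ)) : Fin (i : ℕ) → Fin k → ℝ :=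
  fun l => h ⟨l.1, l.isLt.trans hij⟩

/-- Validity of query maps: measurability, orthonormal rows within each round, and
orthogonality across rounds along consistent histories. -/
def Valid (Q : QueryMaps N k t) : Prop :=
  (∀ (j : Fin t) (i : Fin k) (l : Fin N), Measurable fun h => Q j h i l) ∧
  (∀ (j : Fin t) (h : Fin (j : ℕ) → Fin k → ℝ), Q j h * (Q j h)ᵀ = 1) ∧
  (∀ (j i : Fin t) (hij : (i : ℕ) < (j : ℕ)) (h : Fin (j : ℕ) → Fin k → ℝ),
      Q j h * (Q i (prefixHist h hij))ᵀ = 0)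

/-- Responses of the algorithm under exact linear measurements of `a`. -/
def resp (Q : QueryMaps N k t) (a : Fin N → ℝ) (j : Fin t) : Fin k → ℝ :=
  (Q j fun i => resp Q a ⟨i.1, i.isLt.trans j.isLt⟩).mulVec a
termination_by (j : ℕ)
decreasing_by exact i.isLt

/-- Responses of the algorithm under noisy linear measurements of `a`, with fresh
per-round noise `g`. -/
def nresp (Q : QueryMaps N k t) (a : Fin N → ℝ) (g : Fin t → Fin k → ℝ) (j : Fin t) :
    Fin k → ℝ :=
  ((Q j fun i => nresp Q a g ⟨i.1, i.isLt.trans j.isLt⟩).mulVec a) + g j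
termination_by (j : ℕ)
decreasing_by exact i.isLt

/-- The `tk × N` matrix stacking all the query matrices realized along the run of the
algorithm on input `a` (exact measurements). -/
def runMat (Q : QueryMaps N k t) (a : Fin N → ℝ) : Matrix (Fin t × Fin k) (Fin N) ℝ :=
  Matrix.of fun p l =>
    Q p.1 (fun i => resp Q a ⟨i.1, i.isLt.trans p.1.isLt⟩) p.2 l

end QueryMaps

/-- Kullback–Leibler divergence, valued in `[0, ∞]`, defined with the natural
logarithm. -/
def klDiv {Ω : Type*} [MeasurableSpace Ω] (P Q : Measure Ω) : ℝ≥0∞ :=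
  if P ≪ Q ∧ Integrable (fun x => Real.log ((P.rnDeriv Q x).toReal)) P then
    ENNReal.ofReal (∫ x, Real.log ((P.rnDeriv Q x).toReal) ∂P)
  else ⊤


/-- The rank-`r` plant `Σ_{i=1}^r uᵢ vᵢᵀ` built from the rows of `U` and `V`. -/
def plant {n r : ℕ} (U V : Fin r → Fin n → ℝ) : Matrix (Fin n) (Fin n) ℝ :=
  Matrix.of fun i j => ∑ l, U l i * V l j

/-- Schatten-`p` norm (real `p`), via the singular values. -/
def schattenNorm {n : ℕ} (p : ℝ) (A : Matrix (Fin n) (Fin n) ℝ) : ℝ :=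
  (∑ i ∈ Finset.range n, singVal A (i + 1) ^ p) ^ (1 / p)

/-- Ky-Fan `p` norm: sum of the `p` largest singular values. -/
def kyFanNorm {n : ℕ} (p : ℕ) (A : Matrix (Fin n) (Fin n) ℝ) : ℝ :=
  ∑ i ∈ Finset.range p, singVal A (i + 1)

/-! ### Gaussian measures and quadratic forms -/

/-- The standard Gaussian measure on `ι → ℝ`. -/
abbrev gam (ι : Type*) [Fintype ι] : Measure (ι → ℝ) := Measure.pi fun _ => gaussianReal 0 1

lemma lintegral_gam_prod {ι : Type*} [Fintype ι] (f : ι → ℝ → ℝ≥0∞)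
    (hf : ∀ i, Measurable (f i)) :
    ∫⁻ x, ∏ i, f i (x i) ∂(gam ι) = ∏ i, ∫⁻ x, f i x ∂(gaussianReal 0 1) := by
  have h1 : iIndepFun (fun (i : ι) (x : ι → ℝ) => f i (x i)) (gam ι) :=
    iIndepFun_pi (fun i => (hf i).aemeasurable)
  have h2 := lintegral_prod_eq_prod_lintegral_of_indepFun Finset.univ
    (fun (i : ι) (x : ι → ℝ) => f i (x i)) h1 (fun i => (hf i).comp (measurable_pi_apply i))
  rw [h2]
  refine Finset.prod_congr rfl fun i _ => ?_
  exact (measurePreserving_eval (fun _ : ι => gaussianReal 0 1) i).lintegral_comp (hf i)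

lemma gaussianReal_shift (c : ℝ) : gaussianReal c 1 = (gaussianReal 0 1).withDensity
    (fun x => ENNReal.ofReal (Real.exp (x * c - c ^ 2 / 2))) := by
  rw [gaussianReal_of_var_ne_zero _ one_ne_zero, gaussianReal_of_var_ne_zero _ one_ne_zero,
    ← withDensity_mul _ (by fun_prop) (by fun_prop)]
  congr 1
  ext x
  simp only [Pi.mul_apply, gaussianPDF]
  rw [← ENNReal.ofReal_mul (gaussianPDFReal_nonneg _ _ _)]
  simp only [gaussianPDFReal]
  rw [mul_assoc _ (Real.exp _), ← Real.exp_add]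
  congr 3
  simp; ring

/-- Gaussian shift formula, the finite-dimensional Cameron–Martin theorem. -/
lemma gam_map_add {ι : Type*} [Fintype ι] (c : ι → ℝ) :
    (gam ι).map (fun x => x + c) = (gam ι).withDensity
      (fun x => ENNReal.ofReal (Real.exp (x ⬝ᵥ c - (c ⬝ᵥ c) / 2))) := by
  have h1 : (gam ι).map (fun x => x + c) = Measure.pi fun i => gaussianReal (c i) 1 := by
    have := Measure.pi_map_pi (μ := fun _ : ι => gaussianReal 0 1)
      (f := fun i x => x + c i) (fun i => by fun_prop)
    simp only [gaussianReal_map_add_const, zero_add] at this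
    exact this
  rw [h1]
  refine Measure.pi_eq fun s hs => ?_
  rw [withDensity_apply _ (MeasurableSet.univ_pi hs), ← lintegral_indicator (MeasurableSet.univ_pi hs)]
  simp_rw [fun i => gaussianReal_shift (c i)]
  have : ∀ x : ι → ℝ, (Set.univ.pi s).indicator
      (fun x => ENNReal.ofReal (Real.exp (x ⬝ᵥ c - (c ⬝ᵥ c) / 2))) x
      = ∏ i, (s i).indicator (fun y => ENNReal.ofReal (Real.exp (y * c i - c i ^ 2 / 2))) (x i) := by
    intro x
    by_cases hx : x ∈ Set.univ.pi s
    · rw [Set.indicator_of_mem hx]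
      have hx' : ∀ i, x i ∈ s i := fun i => hx i trivial
      simp_rw [fun i => Set.indicator_of_mem (hx' i)
        (fun y => ENNReal.ofReal (Real.exp (y * c i - c i ^ 2 / 2)))]
      rw [← ENNReal.ofReal_prod_of_nonneg (fun i _ => (Real.exp_pos _).le), ← Real.exp_sum]
      congr 2
      simp only [dotProduct, Finset.sum_div, ← Finset.sum_sub_distrib]
      refine Finset.sum_congr rfl fun i _ => by ring
    · rw [Set.indicator_of_notMem hx]
      have : ∃ i, x i ∉ s i := by simpa [Set.mem_pi] using hx
      obtain ⟨i, hi⟩ := this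
      exact (Finset.prod_eq_zero (Finset.mem_univ i) (Set.indicator_of_notMem hi _)).symm
  simp_rw [this]
  rw [lintegral_gam_prod]
  · refine Finset.prod_congr rfl fun i _ => ?_
    rw [withDensity_apply _ (hs i), lintegral_indicator (hs i)]
  · intro i
    exact Measurable.indicator (by fun_prop) (hs i)

lemma lintegral_gam_add {ι : Type*} [Fintype ι] (c : ι → ℝ) (f : (ι → ℝ) → ℝ≥0∞)
    (hf : Measurable f) :
    ∫⁻ x, f (x + c) ∂(gam ι) =
      ∫⁻ x, ENNReal.ofReal (Real.exp (x ⬝ᵥ c - (c ⬝ᵥ c) / 2)) * f x ∂(gam ι) := by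
  rw [← lintegral_map hf (by fun_prop : Measurable fun x : ι → ℝ => x + c), gam_map_add,
    lintegral_withDensity_eq_lintegral_mul _ _ hf]
  · rfl
  · simp only [dotProduct]; fun_prop

/-- Rotation invariance of the standard Gaussian measure. -/
lemma gam_map_orthogonal {ι : Type*} [Fintype ι] [DecidableEq ι] (O : Matrix ι ι ℝ) (hO : Oᵀ * O = 1) :
    MeasurePreserving (fun x => O *ᵥ x) (gam ι) (gam ι) := by
  let T : EuclideanSpace ℝ ι →ₗᵢ[ℝ] EuclideanSpace ℝ ι :=
    { toLinearMap := Matrix.toEuclideanLin O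
      norm_map' := by
        intro x
        rw [← sq_eq_sq₀ (norm_nonneg _) (norm_nonneg _), EuclideanSpace.real_norm_sq_eq,
          EuclideanSpace.real_norm_sq_eq]
        have : (O *ᵥ x.ofLp) ⬝ᵥ (O *ᵥ x.ofLp) = x.ofLp ⬝ᵥ x.ofLp := by
          rw [Matrix.dotProduct_mulVec, Matrix.vecMul_mulVec, hO, Matrix.vecMul_one]
        simpa [dotProduct, sq] using this }
  let e := T.toLinearIsometryEquiv rfl
  have h := stdGaussian_map e
  rw [← map_pi_eq_stdGaussian] at h
  refine ⟨(by fun_prop), ?_⟩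
  have h2 := congrArg (fun m => m.map (WithLp.ofLp : EuclideanSpace ℝ ι → (ι → ℝ))) h
  simp only at h2
  rw [Measure.map_map (by fun_prop) (by fun_prop), Measure.map_map (by fun_prop) (by fun_prop),
    Measure.map_map (by fun_prop) (by fun_prop)] at h2
  have e1 : (WithLp.ofLp : EuclideanSpace ℝ ι → (ι → ℝ)) ∘ (⇑e ∘ WithLp.toLp 2) = fun x => O *ᵥ x := by
    ext x; rfl
  have e2 : (WithLp.ofLp : EuclideanSpace ℝ ι → (ι → ℝ)) ∘ (WithLp.toLp 2) = id := by
    ext x; rfl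
  rw [Function.comp_assoc, e1, e2, Measure.map_id] at h2
  exact h2

/-- Subexponential bound `E exp (a g²) ≤ exp (2 a)` for `0 ≤ a ≤ 1/4`. -/
lemma gam_exp_sq (a : ℝ) (h0 : 0 ≤ a) (h1 : a ≤ 1 / 4) :
    ∫⁻ x, ENNReal.ofReal (Real.exp (a * x ^ 2)) ∂(gaussianReal 0 1) ≤
      ENNReal.ofReal (Real.exp (2 * a)) := by
  rw [gaussianReal_of_var_ne_zero _ one_ne_zero, lintegral_withDensity_eq_lintegral_mul _
    (by fun_prop) (by fun_prop)]
  have e : ∀ x : ℝ, (gaussianPDF 0 1 * fun x => ENNReal.ofReal (Real.exp (a * x ^ 2))) x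
      = ENNReal.ofReal ((√(2 * Real.pi))⁻¹ * Real.exp (-(1 / 2 - a) * x ^ 2)) := by
    intro x
    simp only [Pi.mul_apply, gaussianPDF]
    rw [← ENNReal.ofReal_mul (gaussianPDFReal_nonneg _ _ _)]
    simp only [gaussianPDFReal]
    rw [mul_assoc _ (Real.exp _), ← Real.exp_add]
    congr 2
    · simp
    · congr 1; simp; ring
  simp_rw [e]
  rw [← ofReal_integral_eq_lintegral_ofReal]
  · apply ENNReal.ofReal_le_ofReal
    rw [integral_const_mul, integral_gaussian]
    have hb : 0 < 1 / 2 - a := by linarith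
    rw [← Real.sqrt_inv, ← Real.sqrt_mul (by positivity)]
    apply Real.sqrt_le_iff.mpr
    refine ⟨(Real.exp_pos _).le, ?_⟩
    rw [← Real.exp_nat_mul]
    have hpi := Real.pi_pos
    have : (2 * Real.pi)⁻¹ * (Real.pi / (1 / 2 - a)) = 1 / (1 - 2 * a) := by
      have : 1 - 2 * a ≠ 0 := by linarith
      field_simp
    rw [this, div_le_iff₀ (by linarith)]
    have h3 := Real.add_one_le_exp (((2:ℕ):ℝ) * (2 * a))
    push_cast at h3 ⊢
    nlinarith
  · exact (integrable_exp_neg_mul_sq (by linarith)).const_mul _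
  · filter_upwards with x
    positivity

lemma sqNorm_eq_dot {ι : Type*} [Fintype ι] (x : ι → ℝ) : sqNorm x = x ⬝ᵥ x := by
  simp [sqNorm, dotProduct, sq]

lemma sqNorm_nonneg {ι : Type*} [Fintype ι] (x : ι → ℝ) : 0 ≤ sqNorm x := by
  unfold sqNorm; positivity

lemma frobSq_eq_trace {m n : Type*} [Fintype m] [Fintype n] (B : Matrix m n ℝ) :
    frobSq B = (Bᵀ * B).trace := by
  simp only [frobSq, Matrix.trace, Matrix.diag, Matrix.mul_apply, Matrix.transpose_apply, sq]
  rw [Finset.sum_comm]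

lemma frobSq_transpose {m n : Type*} [Fintype m] [Fintype n] (B : Matrix m n ℝ) :
    frobSq Bᵀ = frobSq B := by
  simp only [frobSq, Matrix.transpose_apply]
  rw [Finset.sum_comm]

lemma sqNorm_mulVec {m n : Type*} [Fintype m] [Fintype n] (B : Matrix m n ℝ) (x : n → ℝ) :
    sqNorm (B *ᵥ x) = x ⬝ᵥ ((Bᵀ * B) *ᵥ x) := by
  rw [sqNorm_eq_dot, Matrix.dotProduct_mulVec, Matrix.vecMul_mulVec,
    ← Matrix.dotProduct_mulVec]

/-- Diagonalisation of the quadratic form `x ↦ |B x|²`: in an orthonormal basis it is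
`∑ wᵢ yᵢ²`, where the `wᵢ` are the squared singular values of `B`. -/
lemma exists_diag {m n : Type*} [Fintype m] [Fintype n] (B : Matrix m n ℝ) :
    ∃ (O : Matrix n n ℝ) (w : n → ℝ), Oᵀ * O = 1 ∧ (∀ x, sqNorm (B *ᵥ x) = ∑ i, w i * (O *ᵥ x) i ^ 2) ∧
      (∑ i, w i = frobSq B) ∧ (∀ i, 0 ≤ w i) ∧
      (∀ b : ℝ, (∀ x, sqNorm (B *ᵥ x) ≤ b * sqNorm x) → ∀ i, w i ≤ b) ∧
      (Fintype.card {i // w i ≠ 0} = B.rank) := by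
  have hA : (Bᵀ * B).IsHermitian := by
    simpa using Matrix.isHermitian_conjTranspose_mul_self B
  have hU : star (hA.eigenvectorUnitary : Matrix n n ℝ) * hA.eigenvectorUnitary = 1 :=
    Unitary.coe_star_mul_self _
  have hU' : (hA.eigenvectorUnitary : Matrix n n ℝ) * star (hA.eigenvectorUnitary : Matrix n n ℝ) = 1 :=
    Unitary.coe_mul_star_self _
  have hval : ∀ i, hA.eigenvalues i = sqNorm (B *ᵥ ⇑(hA.eigenvectorBasis i)) := by
    intro i
    rw [hA.eigenvalues_eq, sqNorm_mulVec]
    simp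
  refine ⟨star (hA.eigenvectorUnitary : Matrix n n ℝ), hA.eigenvalues, ?_, ?_, ?_, ?_, ?_, ?_⟩
  · simpa [Matrix.star_eq_conjTranspose] using hU'
  · intro x
    rw [sqNorm_mulVec]
    conv_lhs => rw [hA.spectral_theorem, Unitary.conjStarAlgAut_apply]
    rw [← Matrix.mulVec_mulVec, ← Matrix.mulVec_mulVec, Matrix.dotProduct_mulVec]
    have : x ᵥ* (hA.eigenvectorUnitary : Matrix n n ℝ)
        = star (hA.eigenvectorUnitary : Matrix n n ℝ) *ᵥ x := by
      rw [Matrix.star_eq_conjTranspose, Matrix.conjTranspose_eq_transpose_of_trivial,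
        Matrix.mulVec_transpose]
    rw [this]
    simp only [dotProduct, Matrix.mulVec_diagonal]
    refine Finset.sum_congr rfl fun i _ => ?_
    simp; ring
  · rw [frobSq_eq_trace, hA.trace_eq_sum_eigenvalues]; simp
  · intro i; rw [hval]; exact sqNorm_nonneg _
  · intro b hb i
    rw [hval]
    refine (hb _).trans (le_of_eq ?_)
    have : sqNorm (⇑(hA.eigenvectorBasis i)) = 1 := by
      have := hA.eigenvectorBasis.orthonormal.1 i
      rw [EuclideanSpace.norm_eq] at this
      have h2 := (Real.sqrt_eq_one).mp this
      simpa [sqNorm] using h2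
    rw [this, mul_one]
  · rw [← Matrix.rank_transpose_mul_self B, hA.rank_eq_card_non_zero_eigs]

/-- Exponential moments of quadratic forms in Gaussian vectors. -/
lemma lintegral_gam_exp_quad {m n : Type*} [Fintype m] [Fintype n] (B : Matrix m n ℝ) (b l : ℝ)
    (hB : ∀ x, sqNorm (B *ᵥ x) ≤ b * sqNorm x) (hl : 0 ≤ l) (hlb : l * b ≤ 1 / 4) :
    ∫⁻ x, ENNReal.ofReal (Real.exp (l * sqNorm (B *ᵥ x))) ∂(gam n) ≤
      ENNReal.ofReal (Real.exp (2 * l * frobSq B)) := by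
  obtain ⟨O, w, hO, hq, hs, hw0, hwb, -⟩ := exists_diag B
  have hwb := hwb b hB
  have e : ∀ x : n → ℝ, ENNReal.ofReal (Real.exp (l * sqNorm (B *ᵥ x))) =
      (fun y : n → ℝ => ∏ i, ENNReal.ofReal (Real.exp (l * w i * y i ^ 2))) (O *ᵥ x) := by
    intro x
    simp only
    rw [← ENNReal.ofReal_prod_of_nonneg (fun i _ => (Real.exp_pos _).le), ← Real.exp_sum, hq,
      Finset.mul_sum]
    simp only [mul_assoc]
  simp_rw [e]
  rw [(gam_map_orthogonal O hO).lintegral_comp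
      (f := fun y : n → ℝ => ∏ i, ENNReal.ofReal (Real.exp (l * w i * y i ^ 2))) (by fun_prop),
    lintegral_gam_prod (fun i y => ENNReal.ofReal (Real.exp (l * w i * y ^ 2)))
      (fun i => by fun_prop)]
  calc _ ≤ ∏ i, ENNReal.ofReal (Real.exp (2 * (l * w i))) := by
        refine Finset.prod_le_prod' fun i _ => gam_exp_sq _ (mul_nonneg hl (hw0 i)) ?_
        exact (mul_le_mul_of_nonneg_left (hwb i) hl).trans hlb
    _ = _ := by
        rw [← ENNReal.ofReal_prod_of_nonneg (fun i _ => (Real.exp_pos _).le), ← Real.exp_sum, ← hs,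
          Finset.mul_sum]
        simp only [mul_assoc]

/-- `‖B‖_F² ≤ rank B · ‖B‖²`, with `b` standing for a bound on `‖B‖²`. -/
lemma frobSq_le_of_rank {m n : Type*} [Fintype m] [Fintype n] (B : Matrix m n ℝ) (b : ℝ) (r : ℕ)
    (hB : ∀ x, sqNorm (B *ᵥ x) ≤ b * sqNorm x) (hr : B.rank ≤ r) (hb : 0 ≤ b) : frobSq B ≤ r * b := by
  obtain ⟨O, w, hO, hq, hs, hw0, hwb, hrk⟩ := exists_diag B
  have hwb := hwb b hB
  rw [← hs, ← Finset.sum_filter_ne_zero]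
  calc _ ≤ ∑ i ∈ Finset.univ.filter (fun i => w i ≠ 0), b := Finset.sum_le_sum fun i _ => hwb i
    _ = (B.rank : ℝ) * b := by
        rw [Finset.sum_const, ← hrk, Fintype.card_subtype]; simp
    _ ≤ _ := by gcongr

/-! ### Transcripts of adaptive algorithms on shifted Gaussian inputs -/

lemma measurable_mulVec_apply {X m n : Type*} [MeasurableSpace X] [Fintype n]
    (B : X → Matrix m n ℝ) (f : X → n → ℝ) (hB : ∀ i j, Measurable fun x => B x i j)
    (hf : ∀ j, Measurable fun x => f x j) : Measurable fun x => B x *ᵥ f x := by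
  refine measurable_pi_lambda _ fun i => ?_
  simp only [Matrix.mulVec, dotProduct]
  exact Finset.measurable_sum _ fun j _ => (hB i j).mul (hf j)

lemma measurable_sqNorm {X n : Type*} [MeasurableSpace X] [Fintype n]
    (f : X → n → ℝ) (hf : Measurable f) : Measurable fun x => sqNorm (f x) := by
  unfold sqNorm
  fun_prop

/-- A standard Gaussian vector may be sampled by first drawing its image `x` under `Q` (with
orthonormal rows), and then adding the component, orthogonal to the rows of `Q`, of an independent
Gaussian vector `b`. -/
lemma gam_resample {ι κ : Type*} [Fintype ι] [Fintype κ] [DecidableEq ι] [DecidableEq κ] (Q : Matrix κ ι ℝ) (hQ : Q * Qᵀ = 1)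
    (F : (κ → ℝ) → (ι → ℝ) → ℝ≥0∞) (hF : Measurable (Function.uncurry F)) :
    ∫⁻ a, F (Q *ᵥ a) a ∂(gam ι) =
      ∫⁻ x, ∫⁻ b, F x (b - Qᵀ *ᵥ (Q *ᵥ b) + Qᵀ *ᵥ x) ∂(gam ι) ∂(gam κ) := by
  let O : Matrix (ι ⊕ κ) (ι ⊕ κ) ℝ := Matrix.fromBlocks (1 - Qᵀ * Q) Qᵀ Q 0
  have hPP : (Qᵀ * Q) * (Qᵀ * Q) = Qᵀ * Q := by
    rw [Matrix.mul_assoc, ← Matrix.mul_assoc Q, hQ, Matrix.one_mul]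
  have hO : Oᵀ * O = 1 := by
    simp only [O, Matrix.fromBlocks_transpose, Matrix.fromBlocks_multiply,
      Matrix.transpose_sub, Matrix.transpose_mul, Matrix.transpose_transpose,
      Matrix.transpose_one, Matrix.transpose_zero]
    rw [← Matrix.fromBlocks_one]
    congr 1
    · rw [Matrix.sub_mul, Matrix.mul_sub, Matrix.mul_sub, hPP]; simp
    · rw [Matrix.sub_mul, Matrix.mul_assoc, hQ]; simp
    · rw [Matrix.mul_sub, ← Matrix.mul_assoc, hQ]; simp
    · simp [hQ]
  have hmp := gam_map_orthogonal O hO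
  have hsum := measurePreserving_sumPiEquivProdPi (fun _ : ι ⊕ κ => gaussianReal 0 1)
  let Φ : (ι → ℝ) × (κ → ℝ) → ℝ≥0∞ := fun z => F z.2 (z.1 - Qᵀ *ᵥ (Q *ᵥ z.1) + Qᵀ *ᵥ z.2)
  have hΦ : Measurable Φ := by
    refine hF.comp (measurable_snd.prodMk ?_)
    fun_prop
  have h1 : ∫⁻ z, Φ z ∂((gam ι).prod (gam κ)) =
      ∫⁻ z, Φ ((MeasurableEquiv.sumPiEquivProdPi fun _ => ℝ) (O *ᵥ z)) ∂(gam (ι ⊕ κ)) := by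
    rw [← hsum.lintegral_comp hΦ]
    rw [hmp.lintegral_comp (f := fun z => Φ ((MeasurableEquiv.sumPiEquivProdPi fun _ => ℝ) z))
      (hΦ.comp (MeasurableEquiv.measurable _))]
  have h2 : ∀ z : ι ⊕ κ → ℝ, Φ ((MeasurableEquiv.sumPiEquivProdPi fun _ => ℝ) (O *ᵥ z))
      = (fun y : (ι → ℝ) × (κ → ℝ) => F (Q *ᵥ y.1) y.1)
        ((MeasurableEquiv.sumPiEquivProdPi fun _ => ℝ) z) := by
    intro z
    have e1 : ((MeasurableEquiv.sumPiEquivProdPi fun _ => ℝ) (O *ᵥ z)).1 =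
        (z ∘ Sum.inl) - Qᵀ *ᵥ (Q *ᵥ (z ∘ Sum.inl)) + Qᵀ *ᵥ (z ∘ Sum.inr) := by
      ext i
      change (O *ᵥ z) (Sum.inl i) = _
      simp only [O, Matrix.fromBlocks_mulVec, Sum.elim_inl, Matrix.sub_mulVec, Matrix.one_mulVec,
        Matrix.mulVec_mulVec]
    have e2 : ((MeasurableEquiv.sumPiEquivProdPi fun _ => ℝ) (O *ᵥ z)).2 = Q *ᵥ (z ∘ Sum.inl) := by
      ext i
      change (O *ᵥ z) (Sum.inr i) = _
      simp only [O, Matrix.fromBlocks_mulVec, Sum.elim_inr, Matrix.zero_mulVec, add_zero]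
    have e3 : ((MeasurableEquiv.sumPiEquivProdPi fun _ => ℝ) z).1 = z ∘ Sum.inl := rfl
    simp only [Φ]
    rw [e1, e2, e3]
    congr 1
    have : Q *ᵥ (z ∘ Sum.inl - Qᵀ *ᵥ (Q *ᵥ (z ∘ Sum.inl)) + Qᵀ *ᵥ (z ∘ Sum.inr)) = z ∘ Sum.inr := by
      rw [Matrix.mulVec_add, Matrix.mulVec_sub, Matrix.mulVec_mulVec _ Q Qᵀ, Matrix.mulVec_mulVec _ Q Qᵀ, hQ]
      simp
    rw [this]
    abel
  have hm : Measurable (fun y : (ι → ℝ) × (κ → ℝ) => F (Q *ᵥ y.1) y.1) := by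
    refine hF.comp (Measurable.prodMk ?_ measurable_fst)
    exact measurable_mulVec_apply _ _ (fun _ _ => measurable_const)
      (fun j => (measurable_pi_apply j).comp measurable_fst)
  simp_rw [h2] at h1
  rw [hsum.lintegral_comp hm, lintegral_prod _ hm.aemeasurable, lintegral_prod_symm _ hΦ.aemeasurable] at h1
  simp only [lintegral_const, measure_univ, mul_one] at h1
  exact h1.symm

namespace QueryMaps

variable {N k t : ℕ}

/-- The first query matrix. -/
def head (Q : QueryMaps N k (t + 1)) : Matrix (Fin k) (Fin N) ℝ :=
  Q 0 (fun i => absurd i.isLt (by simp))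

/-- The remaining algorithm once the first response is `x`. -/
def tail (Q : QueryMaps N k (t + 1)) (x : Fin k → ℝ) : QueryMaps N k t :=
  fun j h => Q j.succ (Fin.cons (α := fun _ => Fin k → ℝ) x h)

/-- The first `j` rounds of an algorithm. -/
def trunc (Q : QueryMaps N k t) {j : ℕ} (hj : j ≤ t) : QueryMaps N k j :=
  fun i h => Q (Fin.castLE hj i) h

/-- The query matrix used in round `j` along the full history `h`. -/
def qm (Q : QueryMaps N k t) (h : Fin t → Fin k → ℝ) (j : Fin t) : Matrix (Fin k) (Fin N) ℝ :=
  Q j fun i => h ⟨i.1, i.isLt.trans j.isLt⟩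

/-- The squared norm of the part of `θ` seen by the queries along the history `h`. It governs
how much the responses reveal about a planted `θ`. -/
def energy (Q : QueryMaps N k t) (θ : Fin N → ℝ) (h : Fin t → Fin k → ℝ) : ℝ :=
  ∑ j, sqNorm (Q.qm h j *ᵥ θ)

/-- Correlation between the history `h` and the responses that `θ` alone would give to the same
queries. -/
def corr (Q : QueryMaps N k t) (θ : Fin N → ℝ) (h : Fin t → Fin k → ℝ) : ℝ :=
  ∑ j, h j ⬝ᵥ (Q.qm h j *ᵥ θ)

/-- Likelihood ratio, at the history `h`, of the transcript law on input `a + θ` with `a` standard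
Gaussian, with respect to independent standard Gaussian responses. -/
def lr (Q : QueryMaps N k t) (θ : Fin N → ℝ) (h : Fin t → Fin k → ℝ) : ℝ≥0∞ :=
  ENNReal.ofReal (Real.exp (Q.corr θ h - Q.energy θ h / 2))

lemma resp_eq (Q : QueryMaps N k t) (a : Fin N → ℝ) (j : Fin t) :
    resp Q a j = (Q.qm (resp Q a) j) *ᵥ a := by
  rw [resp]; rfl

lemma resp_zero (Q : QueryMaps N k (t + 1)) (a : Fin N → ℝ) :
    resp Q a 0 = Q.head *ᵥ a := by
  rw [resp, head]
  congr 2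
  ext i
  exact absurd i.isLt (by simp)

lemma resp_succ (Q : QueryMaps N k (t + 1)) (a : Fin N → ℝ) :
    ∀ (m : ℕ) (hm : m < t), resp Q a (Fin.succ ⟨m, hm⟩) = resp (Q.tail (Q.head *ᵥ a)) a ⟨m, hm⟩ := by
  intro m
  induction m using Nat.strong_induction_on with
  | _ m ih =>
    intro hm
    rw [resp, resp, tail]
    congr 2
    funext i
    obtain ⟨i, hi⟩ := i
    cases i with
    | zero =>
      have := resp_zero Q a
      exact this
    | succ i =>
      have hi' : i < m := by simpa using hi
      exact ih i hi' (hi'.trans hm)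

lemma resp_cons (Q : QueryMaps N k (t + 1)) (a : Fin N → ℝ) :
    resp Q a = Fin.cons (α := fun _ => Fin k → ℝ) (Q.head *ᵥ a) (resp (Q.tail (Q.head *ᵥ a)) a) := by
  funext j
  refine Fin.cases ?_ (fun j => ?_) j
  · rw [resp_zero]; rfl
  · rw [Fin.cons_succ]; exact resp_succ Q a j.1 j.2

lemma resp_trunc (Q : QueryMaps N k t) {j : ℕ} (hj : j ≤ t) (a : Fin N → ℝ) :
    ∀ (m : ℕ) (hm : m < j), resp (Q.trunc hj) a ⟨m, hm⟩ = resp Q a ⟨m, hm.trans_le hj⟩ := by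
  intro m
  induction m using Nat.strong_induction_on with
  | _ m ih =>
    intro hm
    rw [resp, resp, trunc]
    congr 2
    funext i
    exact ih i.1 i.2 (i.2.trans hm)

/-- Directions orthogonal to all the queries do not influence the responses. -/
lemma resp_add_of_orth (Q : QueryMaps N k t) (d : Fin N → ℝ) (hd : ∀ j h, Q j h *ᵥ d = 0)
    (a : Fin N → ℝ) : resp Q (a + d) = resp Q a := by
  have : ∀ (m : ℕ) (hm : m < t), resp Q (a + d) ⟨m, hm⟩ = resp Q a ⟨m, hm⟩ := by
    intro m
    induction m using Nat.strong_induction_on with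
    | _ m ih =>
      intro hm
      rw [resp, resp, Matrix.mulVec_add, hd, add_zero]
      congr 2
      funext i
      exact ih i.1 i.2 (i.2.trans hm)
  funext j
  exact this j.1 j.2

lemma Valid.trunc {Q : QueryMaps N k t} (hQ : Q.Valid) {j : ℕ} (hj : j ≤ t) : (Q.trunc hj).Valid :=
  ⟨fun i => hQ.1 (Fin.castLE hj i), fun i => hQ.2.1 (Fin.castLE hj i),
    fun i i' => hQ.2.2 (Fin.castLE hj i) (Fin.castLE hj i')⟩

lemma Valid.tail {Q : QueryMaps N k (t + 1)} (hQ : Q.Valid) (x : Fin k → ℝ) : (Q.tail x).Valid := by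
  refine ⟨fun j i l => ?_, fun j h => hQ.2.1 _ _, fun j i hij h => ?_⟩
  · refine (hQ.1 j.succ i l).comp ?_
    refine measurable_pi_lambda _ fun m => ?_
    refine Fin.cases ?_ (fun m => ?_) m
    · exact measurable_const
    · exact measurable_pi_apply m
  · have := hQ.2.2 j.succ i.succ (by simpa using hij) (Fin.cons (α := fun _ => Fin k → ℝ) x h)
    have e : Q.tail x i (prefixHist h hij) = Q i.succ (prefixHist (j := j.succ)
        (Fin.cons (α := fun _ => Fin k → ℝ) x h) (by simpa using hij)) := by
      unfold QueryMaps.tail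
      congr 1
      funext l
      obtain ⟨l, hl⟩ := l
      cases l with
      | zero => rfl
      | succ l => rfl
    rw [e]
    exact this

lemma Valid.tail_head {Q : QueryMaps N k (t + 1)} (hQ : Q.Valid) (x : Fin k → ℝ) (j : Fin t)
    (h : Fin (j : ℕ) → Fin k → ℝ) : Q.tail x j h * Q.headᵀ = 0 := by
  have := hQ.2.2 j.succ 0 (by simp) (Fin.cons (α := fun _ => Fin k → ℝ) x h)
  have e : Q.head = Q 0 (prefixHist (j := j.succ)
      (Fin.cons (α := fun _ => Fin k → ℝ) x h) (by simp)) := by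
    unfold head
    congr 1
    funext l
    exact absurd l.isLt (by simp)
  rw [e]
  exact this

lemma measurable_resp {Ω : Type*} [MeasurableSpace Ω] (Qf : Ω → QueryMaps N k t)
    (hQ : ∀ (j : Fin t) (i : Fin k) (l : Fin N),
      Measurable fun p : Ω × (Fin (j : ℕ) → Fin k → ℝ) => Qf p.1 j p.2 i l) :
    Measurable fun p : Ω × (Fin N → ℝ) => resp (Qf p.1) p.2 := by
  have : ∀ (m : ℕ) (hm : m < t), Measurable fun p : Ω × (Fin N → ℝ) => resp (Qf p.1) p.2 ⟨m, hm⟩ := by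
    intro m
    induction m using Nat.strong_induction_on with
    | _ m ih =>
      intro hm
      simp_rw [resp_eq]
      refine measurable_mulVec_apply _ _ (fun i l => ?_) (fun j => by fun_prop)
      refine (hQ ⟨m, hm⟩ i l).comp (measurable_fst.prodMk ?_)
      exact measurable_pi_lambda _ fun i => ih i.1 i.2 (i.2.trans hm)
  exact measurable_pi_lambda _ fun j => this j.1 j.2

lemma Valid.measurable_resp {Q : QueryMaps N k t} (hQ : Q.Valid) : Measurable (resp Q) := by
  have := QueryMaps.measurable_resp (fun _ : Unit => Q) (fun j i l => (hQ.1 j i l).comp measurable_snd)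
  exact this.comp (measurable_const.prodMk measurable_id : Measurable fun a : Fin N → ℝ => ((), a))

lemma Valid.measurable_qm {Q : QueryMaps N k t} (hQ : Q.Valid) (j : Fin t) (i : Fin k) (l : Fin N) :
    Measurable fun h => Q.qm h j i l :=
  (hQ.1 j i l).comp (measurable_pi_lambda _ fun _ => measurable_pi_apply _)

lemma Valid.measurable_energy {Q : QueryMaps N k t} (hQ : Q.Valid) (θ : Fin N → ℝ) :
    Measurable (Q.energy θ) := by
  unfold energy
  refine Finset.measurable_sum _ fun j _ => measurable_sqNorm _ ?_
  exact measurable_mulVec_apply _ _ (fun i l => hQ.measurable_qm j i l) (fun _ => measurable_const)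

lemma Valid.measurable_lr {Q : QueryMaps N k t} (hQ : Q.Valid) (θ : Fin N → ℝ) :
    Measurable (Q.lr θ) := by
  unfold lr
  refine ENNReal.measurable_ofReal.comp (Real.measurable_exp.comp ?_)
  refine Measurable.sub ?_ ((hQ.measurable_energy θ).div_const 2)
  unfold corr
  refine Finset.measurable_sum _ fun j _ => ?_
  have := measurable_mulVec_apply (fun h => Q.qm h j) (fun _ => θ) (fun i l => hQ.measurable_qm j i l)
    (fun _ => measurable_const)
  simp only [dotProduct]
  refine Finset.measurable_sum _ fun i _ => Measurable.mul (by fun_prop) ?_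
  exact (measurable_pi_apply i).comp this

lemma qm_cons_zero (Q : QueryMaps N k (t + 1)) (x : Fin k → ℝ) (h : Fin t → Fin k → ℝ) :
    Q.qm (Fin.cons (α := fun _ => Fin k → ℝ) x h) 0 = Q.head := by
  unfold qm head
  congr 1
  funext l
  exact absurd l.isLt (by simp)

lemma qm_cons_succ (Q : QueryMaps N k (t + 1)) (x : Fin k → ℝ) (h : Fin t → Fin k → ℝ) (j : Fin t) :
    Q.qm (Fin.cons (α := fun _ => Fin k → ℝ) x h) j.succ = (Q.tail x).qm h j := by
  unfold qm tail
  congr 1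
  funext l
  obtain ⟨l, hl⟩ := l
  cases l with
  | zero => rfl
  | succ l => rfl

lemma lr_cons (Q : QueryMaps N k (t + 1)) (θ : Fin N → ℝ) (x : Fin k → ℝ) (h : Fin t → Fin k → ℝ) :
    Q.lr θ (Fin.cons (α := fun _ => Fin k → ℝ) x h) =
      ENNReal.ofReal (Real.exp (x ⬝ᵥ (Q.head *ᵥ θ) - ((Q.head *ᵥ θ) ⬝ᵥ (Q.head *ᵥ θ)) / 2)) *
        (Q.tail x).lr θ h := by
  unfold lr
  rw [← ENNReal.ofReal_mul (Real.exp_pos _).le, ← Real.exp_add]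
  congr 2
  unfold corr energy
  simp only [Fin.sum_univ_succ, qm_cons_zero, qm_cons_succ, Fin.cons_zero, Fin.cons_succ,
    sqNorm_eq_dot]
  ring

/-- On the input `a + θ` with `a` standard Gaussian, the transcript has density `lr θ` with
respect to independent standard Gaussian responses, since each new query is orthogonal to the
previous ones. -/
theorem lintegral_resp_add : ∀ {t : ℕ} {Q : QueryMaps N k t} (_ : Q.Valid) (θ : Fin N → ℝ)
    (φ : (Fin t → Fin k → ℝ) → ℝ≥0∞) (_ : Measurable φ),
    ∫⁻ a, φ (resp Q (a + θ)) ∂(gam (Fin N)) =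
      ∫⁻ h, Q.lr θ h * φ h ∂(Measure.pi fun _ : Fin t => gam (Fin k))
  | 0, Q, hQ, θ, φ, hφ => by
    have h1 : ∀ a, resp Q (a + θ) = default := fun a => Subsingleton.elim _ _
    have h2 : ∀ h, Q.lr θ h = 1 := fun h => by simp [lr, corr, energy]
    have h3 : ∀ h : Fin 0 → Fin k → ℝ, φ h = φ default := fun h => by congr 1; exact Subsingleton.elim _ _
    simp_rw [h1, h2, h3]
    simp
  | t + 1, Q, hQ, θ, φ, hφ => by
    have hcons : Measurable fun p : (Fin k → ℝ) × (Fin t → Fin k → ℝ) =>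
        (Fin.cons (α := fun _ => Fin k → ℝ) p.1 p.2 : Fin (t + 1) → Fin k → ℝ) := by
      refine measurable_pi_lambda _ fun m => ?_
      refine Fin.cases ?_ (fun m => ?_) m
      · exact measurable_fst
      · exact (measurable_pi_apply m).comp measurable_snd
    -- the transcript as a function of the first response and of an input re-randomised along it
    let F : (Fin k → ℝ) → (Fin N → ℝ) → ℝ≥0∞ := fun x b =>
      φ (resp Q (b - Q.headᵀ *ᵥ (Q.head *ᵥ b) + Q.headᵀ *ᵥ x + θ))
    have hhead : Q.head * Q.headᵀ = 1 := hQ.2.1 _ _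
    have hF : ∀ x b, F x b = φ (Fin.cons (α := fun _ => Fin k → ℝ) (x + Q.head *ᵥ θ)
        (resp (Q.tail (x + Q.head *ᵥ θ)) (b + θ))) := by
      intro x b
      have e1 : Q.head *ᵥ (b - Q.headᵀ *ᵥ (Q.head *ᵥ b) + Q.headᵀ *ᵥ x + θ) = x + Q.head *ᵥ θ := by
        rw [Matrix.mulVec_add, Matrix.mulVec_add, Matrix.mulVec_sub, Matrix.mulVec_mulVec _ Q.head Q.headᵀ,
          Matrix.mulVec_mulVec _ Q.head Q.headᵀ, hhead]
        simp
      have e2 : b - Q.headᵀ *ᵥ (Q.head *ᵥ b) + Q.headᵀ *ᵥ x + θ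
          = (b + θ) + Q.headᵀ *ᵥ (x - Q.head *ᵥ b) := by
        rw [Matrix.mulVec_sub]; abel
      simp only [F]
      rw [resp_cons, e1, e2, resp_add_of_orth]
      intro j h
      rw [Matrix.mulVec_mulVec, hQ.tail_head, Matrix.zero_mulVec]
    have hG : Measurable fun p : (Fin k → ℝ) × (Fin N → ℝ) =>
        φ (Fin.cons (α := fun _ => Fin k → ℝ) p.1 (resp (Q.tail p.1) (p.2 + θ))) := by
      have h1 : Measurable fun p : (Fin k → ℝ) × (Fin N → ℝ) => F (p.1 - Q.head *ᵥ θ) p.2 := by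
        refine hφ.comp (hQ.measurable_resp.comp ?_)
        fun_prop
      simpa [hF] using h1
    calc ∫⁻ a, φ (resp Q (a + θ)) ∂(gam (Fin N))
        = ∫⁻ x, ∫⁻ b, F x b ∂(gam (Fin N)) ∂(gam (Fin k)) := by
          rw [gam_resample Q.head hhead (fun _ a => φ (resp Q (a + θ)))]
          refine hφ.comp (hQ.measurable_resp.comp ?_)
          fun_prop
      _ = ∫⁻ x, (fun y => ∫⁻ b, φ (Fin.cons (α := fun _ => Fin k → ℝ) y
            (resp (Q.tail y) (b + θ))) ∂(gam (Fin N))) (x + Q.head *ᵥ θ) ∂(gam (Fin k)) := by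
          simp_rw [hF]
      _ = ∫⁻ x, ENNReal.ofReal (Real.exp (x ⬝ᵥ (Q.head *ᵥ θ) -
              ((Q.head *ᵥ θ) ⬝ᵥ (Q.head *ᵥ θ)) / 2)) *
            ∫⁻ b, φ (Fin.cons (α := fun _ => Fin k → ℝ) x
            (resp (Q.tail x) (b + θ))) ∂(gam (Fin N)) ∂(gam (Fin k)) := by
          exact lintegral_gam_add (Q.head *ᵥ θ) (fun y => ∫⁻ b, φ (Fin.cons
            (α := fun _ => Fin k → ℝ) y (resp (Q.tail y) (b + θ))) ∂(gam (Fin N)))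
            hG.lintegral_prod_right'
      _ = ∫⁻ x, ∫⁻ h, Q.lr θ (Fin.cons (α := fun _ => Fin k → ℝ) x h) *
            φ (Fin.cons (α := fun _ => Fin k → ℝ) x h)
            ∂(Measure.pi fun _ : Fin t => gam (Fin k)) ∂(gam (Fin k)) := by
          refine lintegral_congr fun x => ?_
          have hφx : Measurable fun h : Fin t → Fin k → ℝ =>
              φ (Fin.cons (α := fun _ => Fin k → ℝ) x h) :=
            hφ.comp (hcons.comp (measurable_const.prodMk measurable_id))
          rw [lintegral_resp_add (hQ.tail x) θ
            (fun h => φ (Fin.cons (α := fun _ => Fin k → ℝ) x h)) hφx,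
            ← lintegral_const_mul _ (by
              exact ((hQ.tail x).measurable_lr θ).mul hφx)]
          simp_rw [lr_cons, mul_assoc]
      _ = _ := by
          have hm : Measurable fun h => Q.lr θ h * φ h := (hQ.measurable_lr θ).mul hφ
          have hmp := (measurePreserving_piFinSuccAbove
            (fun _ : Fin (t + 1) => gam (Fin k)) 0).symm
          rw [← hmp.lintegral_comp hm, lintegral_prod _ (by
            exact (hm.comp (MeasurableEquiv.measurable _)).aemeasurable)]
          have e : ∀ (x : Fin k → ℝ) (y : Fin t → Fin k → ℝ),
              (MeasurableEquiv.piFinSuccAbove (fun _ : Fin (t + 1) => Fin k → ℝ) 0).symm (x, y) =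
                Fin.cons (α := fun _ => Fin k → ℝ) x y := by
            intro x y
            funext j
            refine Fin.cases rfl (fun j => rfl) j
          simp_rw [e]

end QueryMaps

/-! ### Random sign vectors -/

/-- Uniform average over a finite type. -/
def avg {Θ : Type*} [Fintype Θ] (f : Θ → ℝ≥0∞) : ℝ≥0∞ := (Fintype.card Θ : ℝ≥0∞)⁻¹ * ∑ x, f x

section avg
variable {Θ Θ' : Type*} [Fintype Θ] [Fintype Θ']

lemma avg_mono {f g : Θ → ℝ≥0∞} (h : ∀ x, f x ≤ g x) : avg f ≤ avg g := by
  unfold avg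
  gcongr with x
  exact h x

lemma avg_const [Nonempty Θ] (c : ℝ≥0∞) : avg (fun _ : Θ => c) = c := by
  unfold avg
  rw [Finset.sum_const, Finset.card_univ, nsmul_eq_mul, ← mul_assoc, ENNReal.inv_mul_cancel, one_mul]
  · simp
  · simp

lemma avg_add (f g : Θ → ℝ≥0∞) : avg (fun x => f x + g x) = avg f + avg g := by
  unfold avg
  rw [Finset.sum_add_distrib, mul_add]

lemma avg_const_mul (c : ℝ≥0∞) (f : Θ → ℝ≥0∞) : avg (fun x => c * f x) = c * avg f := by
  unfold avg
  rw [← Finset.mul_sum]; ring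

lemma avg_prod (f : Θ × Θ' → ℝ≥0∞) : avg f = avg fun y => avg fun x => f (x, y) := by
  unfold avg
  rw [← Finset.mul_sum, Fintype.sum_prod_type_right, ← mul_assoc, Fintype.card_prod, Nat.cast_mul,
    ENNReal.mul_inv (by simp) (by simp)]
  ring

lemma lintegral_avg {X : Type*} [MeasurableSpace X] (ν : Measure X) (f : Θ → X → ℝ≥0∞)
    (hf : ∀ x, Measurable (f x)) : ∫⁻ a, avg (fun x => f x a) ∂ν = avg fun x => ∫⁻ a, f x a ∂ν := by
  unfold avg
  rw [lintegral_const_mul _ (Finset.measurable_sum _ fun x _ => hf x),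
    lintegral_finsetSum _ fun x _ => hf x]

end avg

/-- The sign vector encoded by `ε`. -/
def sgn {ι : Type*} (ε : ι → Bool) : ι → ℝ := fun i => if ε i then 1 else -1

lemma sqNorm_sgn {ι : Type*} [Fintype ι] (ε : ι → Bool) : sqNorm (sgn ε) = Fintype.card ι := by
  have : ∀ i, sgn ε i ^ 2 = 1 := fun i => by unfold sgn; split_ifs <;> norm_num
  simp [sqNorm, this]

lemma cauchy_dot {ι : Type*} [Fintype ι] (x y : ι → ℝ) : (x ⬝ᵥ y) ^ 2 ≤ sqNorm x * sqNorm y :=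
  Finset.sum_mul_sq_le_sq_mul_sq _ _ _

lemma sqNorm_transpose_mulVec_le {m n : Type*} [Fintype m] [Fintype n] (B : Matrix m n ℝ) (b : ℝ)
    (hb : 0 ≤ b) (hB : ∀ x, sqNorm (B *ᵥ x) ≤ b * sqNorm x) (y : m → ℝ) :
    sqNorm (Bᵀ *ᵥ y) ≤ b * sqNorm y := by
  have h1 : sqNorm (Bᵀ *ᵥ y) = y ⬝ᵥ (B *ᵥ (Bᵀ *ᵥ y)) := by
    rw [sqNorm_mulVec, Matrix.transpose_transpose, Matrix.mulVec_mulVec]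
  have h2 := cauchy_dot y (B *ᵥ (Bᵀ *ᵥ y))
  rw [← h1] at h2
  have h3 := hB (Bᵀ *ᵥ y)
  have h4 := sqNorm_nonneg y
  rcases (sqNorm_nonneg (Bᵀ *ᵥ y)).eq_or_lt with h0 | h0
  · rw [← h0]; positivity
  · have h5 := mul_le_mul_of_nonneg_left h3 h4
    by_contra h
    push Not at h
    nlinarith

/-- Random signs are subgaussian. -/
lemma avg_exp_dot {ι : Type*} [Fintype ι] [DecidableEq ι] (y : ι → ℝ) :
    avg (fun ε : ι → Bool => ENNReal.ofReal (Real.exp (y ⬝ᵥ sgn ε))) ≤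
      ENNReal.ofReal (Real.exp (sqNorm y / 2)) := by
  have h1 : ∑ ε : ι → Bool, Real.exp (y ⬝ᵥ sgn ε) = ∏ i, (2 * Real.cosh (y i)) := by
    have := Finset.prod_univ_sum (fun _ : ι => (Finset.univ : Finset Bool))
      (fun i b => Real.exp (y i * if b then 1 else -1))
    simp only [Fintype.piFinset_univ] at this
    rw [show (∏ i, (2 * Real.cosh (y i))) =
      ∏ i : ι, ∑ j : Bool, Real.exp (y i * if j then 1 else -1) from ?_, this]
    · refine Finset.sum_congr rfl fun ε _ => ?_
      rw [← Real.exp_sum]; rfl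
    · refine Finset.prod_congr rfl fun i _ => ?_
      simp [Real.cosh_eq]
      ring
  unfold avg
  rw [← ENNReal.ofReal_sum_of_nonneg (fun _ _ => (Real.exp_pos _).le), h1,
    Finset.prod_mul_distrib, ENNReal.ofReal_mul (by positivity)]
  have h2 : (Fintype.card (ι → Bool) : ℝ≥0∞) = ENNReal.ofReal (∏ _i : ι, 2) := by
    simp
  rw [h2, ← mul_assoc, ENNReal.inv_mul_cancel, one_mul]
  · refine ENNReal.ofReal_le_ofReal ?_
    rw [show sqNorm y / 2 = ∑ i, y i ^ 2 / 2 by unfold sqNorm; rw [Finset.sum_div], Real.exp_sum]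
    exact Finset.prod_le_prod (fun i _ => (Real.cosh_pos _).le)
      fun i _ => Real.cosh_le_exp_half_sq _
  · simp
  · simp

/-- The Gaussian moment generating function, read as a linearisation of `exp (|c|² / 2)`. -/
lemma exp_half_sq_eq {ι : Type*} [Fintype ι] (c : ι → ℝ) :
    ENNReal.ofReal (Real.exp ((c ⬝ᵥ c) / 2)) =
      ∫⁻ x, ENNReal.ofReal (Real.exp (x ⬝ᵥ c)) ∂(gam ι) := by
  have h := lintegral_gam_add c (fun _ => 1) measurable_const
  simp only [lintegral_one, measure_univ, mul_one] at h
  have e : ∀ x : ι → ℝ, ENNReal.ofReal (Real.exp (x ⬝ᵥ c)) =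
      ENNReal.ofReal (Real.exp ((c ⬝ᵥ c) / 2)) *
        ENNReal.ofReal (Real.exp (x ⬝ᵥ c - (c ⬝ᵥ c) / 2)) := by
    intro x
    rw [← ENNReal.ofReal_mul (Real.exp_pos _).le, ← Real.exp_add]
    congr 2; ring
  simp_rw [e]
  rw [lintegral_const_mul' _ _ ENNReal.ofReal_ne_top, ← h, mul_one]

/-- Exponential moments of quadratic forms in random signs, by comparison with the Gaussian case:
`exp_half_sq_eq` turns the square into a Gaussian average of linear forms. -/
lemma avg_exp_quad {m ι : Type*} [Fintype m] [Fintype ι] [DecidableEq ι] (B : Matrix m ι ℝ) (b l : ℝ)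
    (hb : 0 ≤ b) (hB : ∀ x, sqNorm (B *ᵥ x) ≤ b * sqNorm x) (hl : 0 ≤ l) (hlb : l * b ≤ 1 / 4) :
    avg (fun ε : ι → Bool => ENNReal.ofReal (Real.exp (l * sqNorm (B *ᵥ sgn ε)))) ≤
      ENNReal.ofReal (Real.exp (2 * l * frobSq B)) := by
  have hs : √(2 * l) * √(2 * l) = 2 * l := Real.mul_self_sqrt (by positivity)
  have e1 : ∀ ε : ι → Bool, ENNReal.ofReal (Real.exp (l * sqNorm (B *ᵥ sgn ε))) =
      ∫⁻ x, ENNReal.ofReal (Real.exp ((√(2 * l) • (Bᵀ *ᵥ x)) ⬝ᵥ sgn ε)) ∂(gam m) := by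
    intro ε
    have := exp_half_sq_eq (√(2 * l) • (B *ᵥ sgn ε))
    rw [show (√(2 * l) • (B *ᵥ sgn ε)) ⬝ᵥ (√(2 * l) • (B *ᵥ sgn ε)) / 2 = l * sqNorm (B *ᵥ sgn ε) by
      rw [smul_dotProduct, dotProduct_smul, sqNorm_eq_dot, smul_eq_mul, smul_eq_mul, ← mul_assoc, hs]
      ring] at this
    rw [this]
    refine lintegral_congr fun x => ?_
    congr 2
    rw [dotProduct_smul, smul_dotProduct, Matrix.mulVec_transpose, Matrix.dotProduct_mulVec]
  simp_rw [e1]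
  rw [← lintegral_avg]
  · calc _ ≤ ∫⁻ x, ENNReal.ofReal (Real.exp (l * sqNorm (Bᵀ *ᵥ x))) ∂(gam m) := by
          refine lintegral_mono fun x => (avg_exp_dot _).trans (le_of_eq ?_)
          congr 2
          rw [sqNorm_eq_dot, smul_dotProduct, dotProduct_smul, ← sqNorm_eq_dot, smul_eq_mul,
            smul_eq_mul, ← mul_assoc, hs]
          ring
      _ ≤ _ := by
          rw [← frobSq_transpose]
          exact lintegral_gam_exp_quad Bᵀ b l (sqNorm_transpose_mulVec_le B b hb hB) hl hlb
  · intro ε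
    refine ENNReal.measurable_ofReal.comp (Real.measurable_exp.comp ?_)
    simp only [dotProduct]
    refine Finset.measurable_sum _ fun i _ => Measurable.mul_const ?_ _
    refine Measurable.const_mul ?_ _
    exact (measurable_pi_apply i).comp (measurable_mulVec_apply (fun _ : m → ℝ => Bᵀ) (fun x => x)
      (fun _ _ => measurable_const) (fun j => measurable_pi_apply j))

lemma sum_finProd {n : ℕ} (f : Fin (n * n) → ℝ) :
    ∑ i, f i = ∑ i : Fin n, ∑ j : Fin n, f (finProdFinEquiv (i, j)) := by
  rw [← finProdFinEquiv.sum_comp, Fintype.sum_prod_type]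

lemma tensor_apply {n : ℕ} (u v : Fin n → ℝ) (i j : Fin n) :
    tensor u v (finProdFinEquiv (i, j)) = u i * v j := by
  simp [tensor, _root_.vec]

lemma sqNorm_tensor {n : ℕ} (u v : Fin n → ℝ) : sqNorm (tensor u v) = sqNorm u * sqNorm v := by
  unfold sqNorm
  rw [Finset.sum_mul_sum, sum_finProd]
  simp only [tensor_apply, mul_pow]

/-- Exponential moments of quadratic forms of `u ⊗ v` with random signs `u`, `v`. The
quadratic form is averaged over `u` for fixed `v`, which leaves a quadratic form in `v`. -/
lemma avg_exp_tensor {κ : Type*} [Fintype κ] {n : ℕ} (hn : 0 < n) (M : Matrix κ (Fin (n * n)) ℝ)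
    (hM : ∀ z, sqNorm (M *ᵥ z) ≤ sqNorm z) :
    avg (fun p : (Fin n → Bool) × (Fin n → Bool) =>
      ENNReal.ofReal (Real.exp (1 / (8 * n) * sqNorm (M *ᵥ tensor (sgn p.1) (sgn p.2))))) ≤
      ENNReal.ofReal (Real.exp (frobSq M / (2 * n))) := by
  have hn' : (0 : ℝ) < n := by exact_mod_cast hn
  -- `Bv v` is `u ↦ M (u ⊗ v)`, and `Cm` is the partial flattening with `|Cm v|² = ‖Bv v‖_F²`
  let Bv : (Fin n → ℝ) → Matrix κ (Fin n) ℝ := fun v => Matrix.of fun p i =>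
    ∑ j, M p (finProdFinEquiv (i, j)) * v j
  let Cm : Matrix (κ × Fin n) (Fin n) ℝ := Matrix.of fun p j => M p.1 (finProdFinEquiv (p.2, j))
  have hBv : ∀ u v, Bv v *ᵥ u = M *ᵥ tensor u v := by
    intro u v
    ext p
    simp only [Bv, Matrix.mulVec, dotProduct, Matrix.of_apply]
    rw [sum_finProd]
    refine Finset.sum_congr rfl fun i _ => ?_
    rw [Finset.sum_mul]
    refine Finset.sum_congr rfl fun j _ => ?_
    rw [tensor_apply]; ring
  have hCm : ∀ v, sqNorm (Cm *ᵥ v) = frobSq (Bv v) := by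
    intro v
    simp only [sqNorm, frobSq, Fintype.sum_prod_type]
    rfl
  have hCb : ∀ v, sqNorm (Cm *ᵥ v) ≤ n * sqNorm v := by
    intro v
    rw [hCm]
    have : frobSq (Bv v) = ∑ i, sqNorm (Bv v *ᵥ Pi.single i 1) := by
      simp only [frobSq, sqNorm, Matrix.mulVec_single_one, Matrix.col_apply]
      rw [Finset.sum_comm]
    rw [this]
    calc _ ≤ ∑ i : Fin n, sqNorm v := by
          refine Finset.sum_le_sum fun i _ => ?_
          rw [hBv]
          refine (hM _).trans ?_
          rw [sqNorm_tensor]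
          simp [sqNorm, Pi.single_apply]
      _ = _ := by simp
  have hfC : frobSq Cm = frobSq M := by
    simp only [frobSq, Fintype.sum_prod_type, Cm, Matrix.of_apply]
    refine Finset.sum_congr rfl fun p _ => ?_
    rw [sum_finProd]
  rw [avg_prod]
  calc _ ≤ avg (fun v : Fin n → Bool =>
        ENNReal.ofReal (Real.exp (1 / (4 * n) * sqNorm (Cm *ᵥ sgn v)))) := by
        refine avg_mono fun v => ?_
        have := avg_exp_quad (Bv (sgn v)) n (1 / (8 * n)) hn'.le (fun x => by
          rw [hBv]
          refine (hM _).trans (le_of_eq ?_)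
          rw [sqNorm_tensor, sqNorm_sgn]; simp; ring) (by positivity) (by
            field_simp; norm_num)
        simp only [hBv] at this
        refine this.trans (le_of_eq ?_)
        rw [hCm]
        congr 3; field_simp; norm_num
    _ ≤ _ := by
        refine (avg_exp_quad Cm n (1 / (4 * n)) hn'.le hCb (by positivity) (by
            field_simp; norm_num)).trans (le_of_eq ?_)
        rw [hfC]; congr 2; field_simp; norm_num

/-! ### Captured energy and change of measure -/

lemma sqNorm_mulVec_le_of_orthonormal {κ ι : Type*} [Fintype κ] [Fintype ι] [DecidableEq κ]
    (M : Matrix κ ι ℝ) (hM : M * Mᵀ = 1) (z : ι → ℝ) : sqNorm (M *ᵥ z) ≤ sqNorm z := by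
  have h1 : sqNorm (Mᵀ *ᵥ (M *ᵥ z)) = sqNorm (M *ᵥ z) := by
    rw [sqNorm_mulVec Mᵀ, Matrix.transpose_transpose, hM, Matrix.one_mulVec, sqNorm_eq_dot]
  have h2 : z ⬝ᵥ (Mᵀ *ᵥ (M *ᵥ z)) = sqNorm (M *ᵥ z) := by
    rw [sqNorm_mulVec, Matrix.mulVec_mulVec]
  have h3 := cauchy_dot z (Mᵀ *ᵥ (M *ᵥ z))
  rw [h1, h2] at h3
  have h4 := sqNorm_nonneg z
  by_contra h
  push Not at h
  nlinarith

lemma frobSq_of_orthonormal {κ ι : Type*} [Fintype κ] [Fintype ι] [DecidableEq κ]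
    (M : Matrix κ ι ℝ) (hM : M * Mᵀ = 1) : frobSq M = Fintype.card κ := by
  rw [← frobSq_transpose, frobSq_eq_trace, Matrix.transpose_transpose, hM, Matrix.trace_one]

namespace QueryMaps

variable {N k t : ℕ}

/-- All the query matrices along the history `h`, stacked. -/
def stack (Q : QueryMaps N k t) (h : Fin t → Fin k → ℝ) : Matrix (Fin t × Fin k) (Fin N) ℝ :=
  Matrix.of fun p l => Q.qm h p.1 p.2 l

lemma energy_eq (Q : QueryMaps N k t) (θ : Fin N → ℝ) (h : Fin t → Fin k → ℝ) :
    Q.energy θ h = sqNorm (Q.stack h *ᵥ θ) := by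
  simp only [energy, sqNorm, Fintype.sum_prod_type]
  rfl

lemma Valid.stack_orthonormal {Q : QueryMaps N k t} (hQ : Q.Valid) (h : Fin t → Fin k → ℝ) :
    Q.stack h * (Q.stack h)ᵀ = 1 := by
  have hlt : ∀ i j : Fin t, i < j → Q.qm h j * (Q.qm h i)ᵀ = 0 := fun i j hij =>
    hQ.2.2 j i hij _
  have key : ∀ i j : Fin t, i ≠ j → Q.qm h i * (Q.qm h j)ᵀ = 0 := by
    intro i j hij
    rcases lt_or_gt_of_ne hij with h1 | h1
    · have := congrArg Matrix.transpose (hlt i j h1)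
      simpa [Matrix.transpose_mul] using this
    · exact hlt j i h1
  ext ⟨i, a⟩ ⟨j, b⟩
  have e : (Q.stack h * (Q.stack h)ᵀ) (i, a) (j, b) = (Q.qm h i * (Q.qm h j)ᵀ) a b := rfl
  rw [e]
  by_cases hij : i = j
  · subst hij
    have : Q.qm h i * (Q.qm h i)ᵀ = 1 := hQ.2.1 i _
    rw [this]
    simp [Matrix.one_apply]
  · rw [key i j hij]
    simp [hij]

lemma energy_smul (Q : QueryMaps N k t) (c : ℝ) (θ : Fin N → ℝ) (h : Fin t → Fin k → ℝ) :
    Q.energy (c • θ) h = c ^ 2 * Q.energy θ h := by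
  unfold energy
  simp only [Matrix.mulVec_smul, sqNorm, Pi.smul_apply, smul_eq_mul, mul_pow, Finset.mul_sum]

lemma corr_smul (Q : QueryMaps N k t) (c : ℝ) (θ : Fin N → ℝ) (h : Fin t → Fin k → ℝ) :
    Q.corr (c • θ) h = c * Q.corr θ h := by
  unfold corr
  simp only [Matrix.mulVec_smul, dotProduct_smul, smul_eq_mul, Finset.mul_sum]

/-- For a fixed transcript, a random rank-one direction is barely seen by the queries. -/
lemma Valid.energy_tail {n : ℕ} (hn : 0 < n) {Q : QueryMaps (n * n) k t} (hQ : Q.Valid)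
    (β : ℝ) (hβ : 0 < β) (s : ℝ) (h : Fin t → Fin k → ℝ) :
    avg (fun p : (Fin n → Bool) × (Fin n → Bool) =>
      if s < Q.energy (β • tensor (sgn p.1) (sgn p.2)) h then (1 : ℝ≥0∞) else 0) ≤
      ENNReal.ofReal (Real.exp (t * k / (2 * n) - s / (8 * (β ^ 2 * n)))) := by
  have hn' : (0 : ℝ) < n := by exact_mod_cast hn
  have hM := hQ.stack_orthonormal h
  calc _ ≤ avg (fun p : (Fin n → Bool) × (Fin n → Bool) =>
        ENNReal.ofReal (Real.exp (-(s / (8 * (β ^ 2 * n))))) * ENNReal.ofReal (Real.exp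
          (1 / (8 * n) * sqNorm (Q.stack h *ᵥ tensor (sgn p.1) (sgn p.2))))) := by
        refine avg_mono fun p => ?_
        split_ifs with hs
        · rw [energy_smul, energy_eq] at hs
          rw [← ENNReal.ofReal_mul (Real.exp_pos _).le, ← Real.exp_add, ← ENNReal.ofReal_one]
          refine ENNReal.ofReal_le_ofReal (Real.one_le_exp ?_)
          have : s / (8 * (β ^ 2 * n)) ≤
              1 / (8 * n) * sqNorm (Q.stack h *ᵥ tensor (sgn p.1) (sgn p.2)) := by
            rw [div_le_iff₀ (by positivity)]
            field_simp
            linarith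
          linarith
        · exact zero_le
    _ ≤ _ := by
        rw [avg_const_mul]
        refine (mul_le_mul_right (avg_exp_tensor hn _ (sqNorm_mulVec_le_of_orthonormal _ hM)) _).trans
          (le_of_eq ?_)
        rw [← ENNReal.ofReal_mul (Real.exp_pos _).le, ← Real.exp_add, frobSq_of_orthonormal _ hM]
        congr 2
        simp
        ring

/-- Change of measure: an event that is unlikely under the prior for every fixed transcript
remains unlikely when the algorithm runs on the planted input, as long as the energy captured
by its queries stays bounded. -/
lemma Valid.change_of_measure {Q : QueryMaps N k t} (hQ : Q.Valid) {Θ : Type*} [Fintype Θ]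
    [Nonempty Θ] (θ : Θ → Fin N → ℝ) (F : Θ → Set (Fin t → Fin k → ℝ))
    (hF : ∀ x, MeasurableSet (F x)) (s m : ℝ) (δ : ℝ≥0∞)
    (hδ : ∀ h, avg (fun x => (F x).indicator (fun _ => (1 : ℝ≥0∞)) h) ≤ δ) :
    avg (fun x => gam (Fin N) {a | resp Q (a + θ x) ∈ F x ∧
      Q.energy (θ x) (resp Q (a + θ x)) ≤ s}) ≤
      ENNReal.ofReal (Real.exp (-m)) + ENNReal.ofReal (Real.exp (s + m)) * δ := by
  set ν : Measure (Fin t → Fin k → ℝ) := Measure.pi fun _ : Fin t => gam (Fin k) with hν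
  have hind : ∀ x, Measurable ((F x).indicator (fun _ => (1 : ℝ≥0∞))) := fun x =>
    measurable_const.indicator (hF x)
  have h1 : ∀ x, gam (Fin N) {a | resp Q (a + θ x) ∈ F x ∧
      Q.energy (θ x) (resp Q (a + θ x)) ≤ s} ≤ ENNReal.ofReal (Real.exp (-m)) +
        ∫⁻ h, ENNReal.ofReal (Real.exp (s + m)) * (F x).indicator (fun _ => (1 : ℝ≥0∞)) h ∂ν := by
    intro x
    set S : Set (Fin t → Fin k → ℝ) := F x ∩ {h | Q.energy (θ x) h ≤ s} with hS
    have hSm : MeasurableSet S := (hF x).inter (measurableSet_le (hQ.measurable_energy _) measurable_const)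
    have hmeas : Measurable fun a : Fin N → ℝ => resp Q (a + θ x) :=
      hQ.measurable_resp.comp (by fun_prop)
    have e1 : gam (Fin N) {a | resp Q (a + θ x) ∈ F x ∧ Q.energy (θ x) (resp Q (a + θ x)) ≤ s} =
        ∫⁻ a, S.indicator (fun _ => (1 : ℝ≥0∞)) (resp Q (a + θ x)) ∂(gam (Fin N)) := by
      have : ∀ a, S.indicator (fun _ => (1 : ℝ≥0∞)) (resp Q (a + θ x)) =
          ((fun a : Fin N → ℝ => resp Q (a + θ x)) ⁻¹' S).indicator (fun _ => (1 : ℝ≥0∞)) a :=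
        fun a => rfl
      simp_rw [this]
      rw [lintegral_indicator_const (hmeas hSm), one_mul]
      rfl
    have e2 : ∫⁻ h, Q.lr ((2 : ℝ) • θ x) h ∂ν = 1 := by
      have := lintegral_resp_add hQ ((2 : ℝ) • θ x) (fun _ => 1) measurable_const
      simp only [lintegral_one, measure_univ, mul_one] at this
      exact this.symm
    rw [e1, lintegral_resp_add hQ (θ x) _ (measurable_const.indicator hSm)]
    calc _ ≤ ∫⁻ h, (ENNReal.ofReal (Real.exp (-m)) * Q.lr ((2 : ℝ) • θ x) h +
          ENNReal.ofReal (Real.exp (s + m)) * (F x).indicator (fun _ => (1 : ℝ≥0∞)) h) ∂ν := by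
          refine lintegral_mono fun h => ?_
          by_cases hh : h ∈ S
          -- either the likelihood ratio is at most `exp (s + m)`, or it is dominated by
          -- `exp (-m)` times the likelihood ratio of the doubled shift
          · rw [Set.indicator_of_mem hh, Set.indicator_of_mem hh.1, mul_one, mul_one]
            unfold lr
            rw [energy_smul, corr_smul, ← ENNReal.ofReal_mul (Real.exp_pos _).le, ← Real.exp_add]
            have hE : Q.energy (θ x) h ≤ s := hh.2
            by_cases hc : Q.corr (θ x) h - Q.energy (θ x) h / 2 ≤ s + m
            · refine le_trans ?_ le_add_self
              exact ENNReal.ofReal_le_ofReal (Real.exp_le_exp.2 hc)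
            · refine le_trans ?_ le_self_add
              refine ENNReal.ofReal_le_ofReal (Real.exp_le_exp.2 ?_)
              push Not at hc
              linarith
          · rw [Set.indicator_of_notMem hh, mul_zero]
            exact zero_le
      _ = _ := by
          rw [lintegral_add_left ((hQ.measurable_lr _).const_mul _),
            lintegral_const_mul _ (hQ.measurable_lr _), e2, mul_one]
  refine (avg_mono h1).trans ?_
  rw [avg_add, avg_const]
  gcongr
  rw [← lintegral_avg _ _ fun x => (hind x).const_mul _]
  simp_rw [avg_const_mul]
  calc _ ≤ ∫⁻ _, ENNReal.ofReal (Real.exp (s + m)) * δ ∂ν := by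
        refine lintegral_mono fun h => ?_
        gcongr
        exact hδ h
    _ = _ := by simp [hν]

/-- Extension of a history of `j` rounds by a zero response. -/
def extHist {j : ℕ} (h : Fin j → Fin k → ℝ) : Fin (j + 1) → Fin k → ℝ :=
  fun i => if hi : (i : ℕ) < j then h ⟨i, hi⟩ else 0

lemma measurable_extHist {j : ℕ} : Measurable (extHist : (Fin j → Fin k → ℝ) → _) := by
  refine measurable_pi_lambda _ fun i => ?_
  unfold extHist
  split_ifs
  · exact measurable_pi_apply _
  · exact measurable_const

/-- The query of a round is determined by the responses of the previous rounds. -/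
lemma energy_extHist (Q : QueryMaps N k t) {j : ℕ} (hj : j + 1 ≤ t) (θ a : Fin N → ℝ) :
    (Q.trunc hj).energy θ (resp (Q.trunc hj) a) =
      (Q.trunc hj).energy θ (extHist (resp (Q.trunc (Nat.le_of_succ_le hj)) a)) := by
  unfold energy
  refine Finset.sum_congr rfl fun i _ => ?_
  congr 2
  unfold qm
  congr 1
  funext l
  have hl : (l : ℕ) < j := by have := l.isLt; have := i.isLt; omega
  simp only [extHist, hl, dif_pos]
  rw [resp_trunc, resp_trunc]

end QueryMaps

/-! ### Growth of the captured energy -/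

/-- Factor by which the captured energy may grow per round. -/
abbrev growth : ℝ := 409600

/-- Pairs of sign vectors. -/
abbrev Signs (n : ℕ) : Type := (Fin n → Bool) × (Fin n → Bool)

/-- The planted rank-one direction `β u vᵀ`, flattened. -/
def spike {n : ℕ} (β : ℝ) (p : Signs n) : Fin (n * n) → ℝ := β • tensor (sgn p.1) (sgn p.2)

lemma exp_five_le (j : ℕ) (y : ℝ) (hy : 5 * ((j : ℝ) + 1) ≤ y) :
    Real.exp (-y) ≤ (1 / 2) ^ j / 32 := by
  have h1 : Real.exp (-1) ≤ 1 / 2 := by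
    rw [Real.exp_neg, one_div]
    refine inv_anti₀ (by norm_num) ?_
    have := Real.add_one_le_exp (1 : ℝ)
    linarith
  calc Real.exp (-y) ≤ Real.exp (-(5 * ((j : ℝ) + 1))) := Real.exp_le_exp.2 (by linarith)
    _ = Real.exp (-1) ^ (5 * (j + 1)) := by
        rw [← Real.exp_nat_mul]; push_cast; ring_nf
    _ ≤ (1 / 2) ^ (5 * (j + 1)) := by gcongr
    _ ≤ (1 / 2) ^ (j + 5) := by
        refine pow_le_pow_of_le_one (by norm_num) (by norm_num) (by omega)
    _ = _ := by rw [pow_add]; norm_num; ring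

lemma growth_pow (j : ℕ) : (j : ℝ) + 1 ≤ growth ^ j := by
  have := one_add_mul_le_pow (a := (growth - 1)) (by norm_num [growth]) j
  have h2 : (j : ℝ) + 1 ≤ 1 + j * (growth - 1) := by
    have : (0 : ℝ) ≤ j := by positivity
    norm_num [growth]; linarith
  calc _ ≤ _ := h2
    _ ≤ _ := this
    _ = _ := by norm_num [growth]

namespace QueryMaps

variable {n k t : ℕ}

/-- The energy captured in the first `j` rounds rarely exceeds `growth ^ j * (k / n)`. While the
energy of `j` rounds is at most `s`, the posterior inflates prior probabilities by about `exp s`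
only, whereas the next query captures energy `growth * s` with prior probability well below
`exp (-s)`. -/
lemma Valid.energy_growth (hn : 0 < n) (hk : n ≤ k) {Q : QueryMaps (n * n) k t} (hQ : Q.Valid)
    (β : ℝ) (hβ : 0 < β) (hβn : β ^ 2 * n = 4096) :
    ∀ (j : ℕ) (hj : j ≤ t), avg (fun p : Signs n => gam (Fin (n * n))
      {a | growth ^ j * ((k : ℝ) / n) < (Q.trunc hj).energy (spike β p)
        (resp (Q.trunc hj) (a + spike β p))}) ≤ ENNReal.ofReal ((1 - (1 / 2) ^ j) / 8) := by
  have hn' : (0 : ℝ) < n := by exact_mod_cast hn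
  have hκ : (1 : ℝ) ≤ (k : ℝ) / n := by
    rw [le_div_iff₀ hn']; simpa using (by exact_mod_cast hk : (n : ℝ) ≤ k)
  set κ : ℝ := (k : ℝ) / n with hκdef
  intro j
  induction j with
  | zero =>
    intro hj
    have : ∀ (p : Signs n) (a : Fin (n * n) → ℝ), ¬ (growth ^ 0 * κ <
        (Q.trunc hj).energy (spike β p) (resp (Q.trunc hj) (a + spike β p))) := by
      intro p a
      simp only [energy, Finset.univ_eq_empty, Finset.sum_empty, pow_zero, one_mul]
      linarith
    simp only [this, Set.ofPred_false, measure_empty]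
    rw [avg_const]; simp
  | succ j ih =>
    intro hj
    have hj' : j ≤ t := Nat.le_of_succ_le hj
    set F : Signs n → Set (Fin j → Fin k → ℝ) := fun p =>
      {h | growth ^ (j + 1) * κ < (Q.trunc hj).energy (spike β p) (extHist h)} with hFdef
    have hF : ∀ p, MeasurableSet (F p) := fun p =>
      measurableSet_lt measurable_const (((hQ.trunc hj).measurable_energy _).comp measurable_extHist)
    have hcm := (hQ.trunc hj').change_of_measure (spike β) F hF (growth ^ j * κ) (5 * (j + 1) * κ)
      (ENNReal.ofReal (Real.exp (((j + 1 : ℕ) : ℝ) * k / (2 * n) -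
        (growth ^ (j + 1) * κ) / (8 * (β ^ 2 * n))))) (fun h => by
        refine le_trans (le_of_eq ?_)
          ((hQ.trunc hj).energy_tail hn β hβ (growth ^ (j + 1) * κ) (extHist h))
        congr 1)
    have hstep : avg (fun p : Signs n => gam (Fin (n * n))
        {a | growth ^ (j + 1) * κ < (Q.trunc hj).energy (spike β p)
          (resp (Q.trunc hj) (a + spike β p))}) ≤
        avg (fun p : Signs n => gam (Fin (n * n)) {a | growth ^ j * κ <
          (Q.trunc hj').energy (spike β p) (resp (Q.trunc hj') (a + spike β p))}) +
        avg (fun p : Signs n => gam (Fin (n * n)) {a | resp (Q.trunc hj') (a + spike β p) ∈ F p ∧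
          (Q.trunc hj').energy (spike β p) (resp (Q.trunc hj') (a + spike β p)) ≤ growth ^ j * κ}) := by
      rw [← avg_add]
      refine avg_mono fun p => (measure_mono ?_).trans (measure_union_le _ _)
      intro a ha
      by_cases hc : growth ^ j * κ <
          (Q.trunc hj').energy (spike β p) (resp (Q.trunc hj') (a + spike β p))
      · exact Or.inl hc
      · refine Or.inr ⟨?_, not_lt.1 hc⟩
        simp only [Set.mem_ofPred_eq] at ha
        rw [energy_extHist] at ha
        exact ha
    refine hstep.trans ((add_le_add (ih hj') hcm).trans ?_)
    have hg := growth_pow j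
    have hjκ : (0 : ℝ) ≤ j + 1 := by positivity
    have e1 := exp_five_le j (5 * (j + 1) * κ) (by nlinarith)
    have e2 : Real.exp (growth ^ j * κ + 5 * (j + 1) * κ) * Real.exp (((j + 1 : ℕ) : ℝ) * k / (2 * n) -
        (growth ^ (j + 1) * κ) / (8 * (β ^ 2 * n))) ≤ (1 / 2) ^ j / 32 := by
      refine le_trans ?_ e1
      rw [← Real.exp_add, hβn]
      refine Real.exp_le_exp.2 ?_
      have e3 : ((j + 1 : ℕ) : ℝ) * k / (2 * n) = (j + 1) * κ / 2 := by
        rw [hκdef]; push_cast; field_simp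
      rw [e3, pow_succ]
      have e4 : growth ^ j * growth * κ / (8 * 4096) = 12.5 * (growth ^ j * κ) := by
        norm_num [growth]; ring
      rw [e4]
      have e5 : ((j : ℝ) + 1) * κ ≤ growth ^ j * κ := by gcongr
      have e6 : 0 ≤ ((j : ℝ) + 1) * κ := by positivity
      linarith
    rw [← ENNReal.ofReal_mul (Real.exp_pos _).le, ← ENNReal.ofReal_add (Real.exp_pos _).le (by positivity),
      ← ENNReal.ofReal_add ?_ (by positivity)]
    · refine ENNReal.ofReal_le_ofReal ?_
      have e7 : (1 / 2 : ℝ) ^ (j + 1) = (1 / 2) ^ j / 2 := by rw [pow_succ]; ring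
      rw [e7]
      linarith
    · have : (1 / 2 : ℝ) ^ j ≤ 1 := pow_le_one₀ (by norm_num) (by norm_num)
      linarith

/-- If, for every fixed transcript, the event `F` has probability at most `exp d` under the uniform
prior on signs, and `d` beats the bound `growth ^ t * (k / n)` on the captured energy, then `F` has
small probability under the planted inputs. -/
lemma Valid.final_bound (hn : 0 < n) (hk : n ≤ k) {Q : QueryMaps (n * n) k t} (hQ : Q.Valid)
    (β : ℝ) (hβ : 0 < β) (hβn : β ^ 2 * n = 4096) (F : Signs n → Set (Fin t → Fin k → ℝ))
    (hF : ∀ x, MeasurableSet (F x)) (d : ℝ)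
    (hδ : ∀ h, avg (fun x => (F x).indicator (fun _ => (1 : ℝ≥0∞)) h) ≤ ENNReal.ofReal (Real.exp d))
    (hd : growth ^ t * ((k : ℝ) / n) + 10 + d ≤ 0) :
    avg (fun p : Signs n => gam (Fin (n * n)) {a | resp Q (a + spike β p) ∈ F p}) ≤
      ENNReal.ofReal (1 / 4) := by
  have h1 := hQ.energy_growth hn hk β hβ hβn t le_rfl
  have h2 := hQ.change_of_measure (spike β) F hF (growth ^ t * ((k : ℝ) / n)) 5 _ hδ
  have h3 : avg (fun p : Signs n => gam (Fin (n * n)) {a | resp Q (a + spike β p) ∈ F p}) ≤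
      avg (fun p : Signs n => gam (Fin (n * n)) {a | growth ^ t * ((k : ℝ) / n) <
          (Q.trunc le_rfl).energy (spike β p) (resp (Q.trunc le_rfl) (a + spike β p))}) +
      avg (fun p : Signs n => gam (Fin (n * n)) {a | resp Q (a + spike β p) ∈ F p ∧
          Q.energy (spike β p) (resp Q (a + spike β p)) ≤ growth ^ t * ((k : ℝ) / n)}) := by
    rw [← avg_add]
    refine avg_mono fun p => (measure_mono ?_).trans (measure_union_le _ _)
    intro a ha
    by_cases hc : growth ^ t * ((k : ℝ) / n) < Q.energy (spike β p) (resp Q (a + spike β p))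
    · exact Or.inl hc
    · exact Or.inr ⟨ha, not_lt.1 hc⟩
  refine h3.trans ((add_le_add h1 h2).trans ?_)
  have e1 := exp_five_le 0 5 (by norm_num)
  have e2 : Real.exp (growth ^ t * ((k : ℝ) / n) + 5) * Real.exp d ≤ (1 / 2) ^ 0 / 32 := by
    refine le_trans ?_ e1
    rw [← Real.exp_add]
    exact Real.exp_le_exp.2 (by linarith)
  have e3 : (0 : ℝ) ≤ (1 / 2) ^ t := by positivity
  have e4 : (1 / 2 : ℝ) ^ t ≤ 1 := pow_le_one₀ (by norm_num) (by norm_num)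
  rw [← ENNReal.ofReal_mul (Real.exp_pos _).le, ← ENNReal.ofReal_add (Real.exp_pos _).le (by positivity),
      ← ENNReal.ofReal_add (by linarith) (by positivity)]
  refine ENNReal.ofReal_le_ofReal ?_
  norm_num at e1 e2 ⊢
  linarith

end QueryMaps

/-! ### Operator norm of a Gaussian matrix -/

/-- The matrix whose flattening is `a`. -/
def unvec {n : ℕ} (a : Fin (n * n) → ℝ) : Matrix (Fin n) (Fin n) ℝ :=
  Matrix.of fun i j => a (finProdFinEquiv (i, j))

lemma vec_unvec {n : ℕ} (a : Fin (n * n) → ℝ) : _root_.vec n (unvec a) = a := by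
  funext l
  show a (finProdFinEquiv (finProdFinEquiv.symm l)) = a l
  rw [Equiv.apply_symm_apply]

lemma sqNorm_mulVec_le_frobSq {m n : Type*} [Fintype m] [Fintype n] (A : Matrix m n ℝ) (x : n → ℝ) :
    sqNorm (A *ᵥ x) ≤ frobSq A * sqNorm x := by
  unfold sqNorm frobSq
  rw [Finset.sum_mul]
  exact Finset.sum_le_sum fun i _ => cauchy_dot (A i) x

lemma sqNorm_smul {ι : Type*} [Fintype ι] (c : ℝ) (x : ι → ℝ) : sqNorm (c • x) = c ^ 2 * sqNorm x := by
  simp only [sqNorm, Pi.smul_apply, smul_eq_mul, mul_pow, Finset.mul_sum]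

lemma measurable_sqNorm_unvec {X : Type*} [MeasurableSpace X] {n : ℕ} (f : X → Fin (n * n) → ℝ)
    (g : X → Fin n → ℝ) (hf : Measurable f) (hg : Measurable g) :
    Measurable fun x => sqNorm (unvec (f x) *ᵥ g x) := by
  refine measurable_sqNorm _ (measurable_mulVec_apply _ _ (fun i j => ?_) (fun j => ?_))
  · exact (measurable_pi_apply (finProdFinEquiv (i, j))).comp hf
  · exact (measurable_pi_apply _).comp hg

/-- Exponential moment of `|G x|²` for a fixed vector `x` and a Gaussian matrix `G`. -/
lemma lintegral_exp_unvec {n : ℕ} (x : Fin n → ℝ) (hx : sqNorm x ≤ 9 / 4) :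
    ∫⁻ a, ENNReal.ofReal (Real.exp (1 / 9 * sqNorm (unvec a *ᵥ x))) ∂(gam (Fin (n * n))) ≤
      ENNReal.ofReal (Real.exp (n / 2)) := by
  let Lx : Matrix (Fin n) (Fin (n * n)) ℝ := Matrix.of fun i l =>
    if (finProdFinEquiv.symm l).1 = i then x (finProdFinEquiv.symm l).2 else 0
  have hL : ∀ a, Lx *ᵥ a = unvec a *ᵥ x := by
    intro a
    ext i
    simp only [Matrix.mulVec, dotProduct, Lx, Matrix.of_apply, unvec]
    rw [sum_finProd, Finset.sum_eq_single i]
    · refine Finset.sum_congr rfl fun j _ => ?_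
      simp [mul_comm]
    · intro i' _ hi'
      refine Finset.sum_eq_zero fun j _ => ?_
      simp [hi']
    · simp
  have hop : ∀ a, sqNorm (Lx *ᵥ a) ≤ sqNorm x * sqNorm a := by
    intro a
    rw [hL]
    refine (sqNorm_mulVec_le_frobSq _ _).trans (le_of_eq ?_)
    rw [mul_comm]
    congr 1
    unfold sqNorm frobSq
    rw [sum_finProd]; rfl
  have hfr : frobSq Lx = n * sqNorm x := by
    unfold frobSq
    have : ∀ i, ∑ j, Lx i j ^ 2 = sqNorm x := by
      intro i
      rw [sum_finProd, Finset.sum_eq_single i]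
      · simp only [Lx, Matrix.of_apply, Equiv.symm_apply_apply, if_true, sqNorm]
      · intro i' _ hi'
        refine Finset.sum_eq_zero fun j _ => ?_
        simp only [Lx, Matrix.of_apply, Equiv.symm_apply_apply, if_neg hi', ne_eq,
          OfNat.ofNat_ne_zero, not_false_eq_true, zero_pow]
      · simp
    simp [this]
  have := lintegral_gam_exp_quad Lx (sqNorm x) (1 / 9) hop (by norm_num) (by linarith)
  simp only [hL] at this
  refine this.trans (ENNReal.ofReal_le_ofReal (Real.exp_le_exp.2 ?_))
  rw [hfr]
  have hn : (0 : ℝ) ≤ n := by positivity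
  nlinarith

lemma sqNorm_add_add_sub {ι : Type*} [Fintype ι] (x y : ι → ℝ) :
    sqNorm (x + y) + sqNorm (x - y) = 2 * sqNorm x + 2 * sqNorm y := by
  unfold sqNorm
  rw [Finset.mul_sum, Finset.mul_sum, ← Finset.sum_add_distrib, ← Finset.sum_add_distrib]
  refine Finset.sum_congr rfl fun i _ => ?_
  simp only [Pi.add_apply, Pi.sub_apply]; ring

lemma continuous_sqNorm {ι : Type*} [Fintype ι] : Continuous (sqNorm : (ι → ℝ) → ℝ) := by
  unfold sqNorm; fun_prop

open scoped Pointwise in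
/-- The Euclidean balls of radii `3/2` and `1/2` in `Fin n → ℝ`. -/
lemma volume_ball_facts (n : ℕ) :
    volume {x : Fin n → ℝ | sqNorm x ≤ 9 / 4} = 3 ^ n * volume {x : Fin n → ℝ | sqNorm x ≤ 1 / 4} ∧
    volume {x : Fin n → ℝ | sqNorm x ≤ 1 / 4} ≠ 0 ∧ volume {x : Fin n → ℝ | sqNorm x ≤ 1 / 4} ≠ ⊤ := by
  refine ⟨?_, ?_, ?_⟩
  · have h : {x : Fin n → ℝ | sqNorm x ≤ 9 / 4} = (3 : ℝ) • {x : Fin n → ℝ | sqNorm x ≤ 1 / 4} := by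
      ext x
      rw [Set.mem_smul_set_iff_inv_smul_mem₀ (by norm_num)]
      simp only [Set.mem_ofPred_eq, sqNorm_smul]
      constructor <;> intro h <;> linarith
    rw [h, Measure.addHaar_smul]
    congr 1
    simp
  · have hopen : IsOpen {x : Fin n → ℝ | sqNorm x < 1 / 4} :=
      isOpen_lt continuous_sqNorm continuous_const
    have hne : ({x : Fin n → ℝ | sqNorm x < 1 / 4}).Nonempty := ⟨0, by simp [sqNorm]⟩
    have := hopen.measure_pos volume hne
    exact (this.trans_le (measure_mono fun x (hx : sqNorm x < 1 / 4) => hx.le)).ne'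
  · have hb : Bornology.IsBounded {x : Fin n → ℝ | sqNorm x ≤ 1 / 4} := by
      refine (Metric.isBounded_closedBall (x := (0 : Fin n → ℝ)) (r := 1)).subset fun x hx => ?_
      rw [mem_closedBall_zero_iff, pi_norm_le_iff_of_nonneg zero_le_one]
      intro i
      have h1 : x i ^ 2 ≤ sqNorm x :=
        Finset.single_le_sum (f := fun i => x i ^ 2) (fun i _ => sq_nonneg _) (Finset.mem_univ i)
      have h2 : sqNorm x ≤ 1 / 4 := hx
      rw [Real.norm_eq_abs]
      exact abs_le_one_iff_mul_self_le_one.2 (by nlinarith)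
    exact hb.measure_lt_top.ne

/-- A Gaussian matrix has squared operator norm at most `108 n` with probability `3/4`. The sup
over the unit sphere is replaced by an integral over a ball: if `|G e|` is large then for each `z`
one of `|G (e + z)|`, `|G (e - z)|` is at least as large. -/
lemma gam_opNorm {n : ℕ} (hn : 0 < n) :
    gam (Fin (n * n)) {a | ∃ x, 108 * n * sqNorm x < sqNorm (unvec a *ᵥ x)} ≤ ENNReal.ofReal (1 / 4) := by
  obtain ⟨hv3, hv0, hvt⟩ := volume_ball_facts n
  have hn1 : (1 : ℝ) ≤ n := by exact_mod_cast hn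
  set S : Set (Fin n → ℝ) := {x | sqNorm x ≤ 1 / 4} with hS
  set S3 : Set (Fin n → ℝ) := {x | sqNorm x ≤ 9 / 4} with hS3
  have hmS : MeasurableSet S := (isClosed_le continuous_sqNorm continuous_const).measurableSet
  have hmS3 : MeasurableSet S3 := (isClosed_le continuous_sqNorm continuous_const).measurableSet
  let Φ : (Fin (n * n) → ℝ) → (Fin n → ℝ) → ℝ≥0∞ := fun a x =>
    S3.indicator (fun x => ENNReal.ofReal (Real.exp (1 / 9 * sqNorm (unvec a *ᵥ x)))) x
  have hΦ : Measurable (Function.uncurry Φ) := by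
    have h1 : Measurable fun p : (Fin (n * n) → ℝ) × (Fin n → ℝ) =>
        ENNReal.ofReal (Real.exp (1 / 9 * sqNorm (unvec p.1 *ᵥ p.2))) :=
      ENNReal.measurable_ofReal.comp (Real.measurable_exp.comp
        ((measurable_sqNorm_unvec _ _ measurable_fst measurable_snd).const_mul _))
    exact h1.indicator (measurable_snd hmS3)
  have hΦa : ∀ a, Measurable (Φ a) := fun a => hΦ.of_uncurry_left
  have key : ∀ a, (∃ x, 108 * n * sqNorm x < sqNorm (unvec a *ᵥ x)) →
      ENNReal.ofReal (Real.exp (12 * n)) * volume S ≤ 2 * ∫⁻ x, Φ a x := by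
    rintro a ⟨x, hx⟩
    have hx0 : 0 < sqNorm x := by
      refine lt_of_le_of_ne (sqNorm_nonneg x) fun h0 => ?_
      have := sqNorm_mulVec_le_frobSq (unvec a) x
      rw [← h0] at this hx
      linarith
    set e : Fin n → ℝ := (√(sqNorm x))⁻¹ • x with he
    have he1 : sqNorm e = 1 := by
      rw [he, sqNorm_smul, inv_pow, Real.sq_sqrt hx0.le]; field_simp
    have he2 : 108 * n ≤ sqNorm (unvec a *ᵥ e) := by
      rw [he, Matrix.mulVec_smul, sqNorm_smul, inv_pow, Real.sq_sqrt hx0.le]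
      rw [inv_mul_eq_div, le_div_iff₀ hx0]
      exact hx.le
    have hmem : ∀ z ∈ S, e + z ∈ S3 ∧ e - z ∈ S3 := by
      intro z hz
      have hz' : sqNorm z ≤ 1 / 4 := hz
      have hc := cauchy_dot e z
      rw [he1, one_mul] at hc
      have h1 : sqNorm (e + z) = 1 + 2 * (e ⬝ᵥ z) + sqNorm z := by
        rw [← he1, sqNorm_eq_dot, sqNorm_eq_dot, sqNorm_eq_dot]
        simp only [add_dotProduct, dotProduct_add, dotProduct_comm z e]; ring
      have h2 : sqNorm (e - z) = 1 - 2 * (e ⬝ᵥ z) + sqNorm z := by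
        rw [← he1, sqNorm_eq_dot, sqNorm_eq_dot, sqNorm_eq_dot]
        simp only [sub_dotProduct, dotProduct_sub, dotProduct_comm z e]; ring
      have h3 : |e ⬝ᵥ z| ≤ 1 / 2 := abs_le_of_sq_le_sq (by linarith) (by norm_num)
      have h4 := abs_le.1 h3
      constructor
      · show sqNorm (e + z) ≤ 9 / 4
        rw [h1]; linarith
      · show sqNorm (e - z) ≤ 9 / 4
        rw [h2]; linarith
    have hpt : ∀ z, S.indicator (fun _ => ENNReal.ofReal (Real.exp (12 * n))) z ≤
        Φ a (z + e) + Φ a (e - z) := by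
      intro z
      by_cases hz : z ∈ S
      · have hp := sqNorm_add_add_sub (unvec a *ᵥ e) (unvec a *ᵥ z)
        rw [← Matrix.mulVec_add, ← Matrix.mulVec_sub] at hp
        have hz0 := sqNorm_nonneg (unvec a *ᵥ z)
        simp only [Φ]
        rw [Set.indicator_of_mem hz, add_comm z e, Set.indicator_of_mem (hmem z hz).1,
          Set.indicator_of_mem (hmem z hz).2]
        by_cases hc : 108 * n ≤ sqNorm (unvec a *ᵥ (e + z))
        · refine le_trans (ENNReal.ofReal_le_ofReal (Real.exp_le_exp.2 ?_)) le_self_add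
          linarith
        · refine le_trans (ENNReal.ofReal_le_ofReal (Real.exp_le_exp.2 ?_)) le_add_self
          linarith
      · rw [Set.indicator_of_notMem hz]; exact zero_le
    calc ENNReal.ofReal (Real.exp (12 * n)) * volume S
        = ∫⁻ z, S.indicator (fun _ => ENNReal.ofReal (Real.exp (12 * n))) z := by
          rw [lintegral_indicator_const hmS]
      _ ≤ ∫⁻ z, (Φ a (z + e) + Φ a (e - z)) := lintegral_mono hpt
      _ = 2 * ∫⁻ x, Φ a x := by
          rw [lintegral_add_left (by exact (hΦa a).comp (measurable_id.add_const e)),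
            lintegral_add_right_eq_self (Φ a) e,
            lintegral_sub_left_eq_self (Φ a) e, two_mul]
  have hint : ∫⁻ a, (2 * ∫⁻ x, Φ a x) ∂(gam (Fin (n * n))) ≤
      2 * (ENNReal.ofReal (Real.exp (n / 2)) * (3 ^ n * volume S)) := by
    rw [lintegral_const_mul _ (by exact hΦ.lintegral_prod_right')]
    gcongr
    rw [lintegral_lintegral_swap hΦ.aemeasurable, ← hv3, ← lintegral_indicator_const hmS3]
    refine lintegral_mono fun x => ?_
    by_cases hx : x ∈ S3
    · simp only [Φ, Set.indicator_of_mem hx]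
      exact lintegral_exp_unvec x hx
    · simp [Φ, Set.indicator_of_notMem hx]
  have hmk := mul_meas_ge_le_lintegral (μ := gam (Fin (n * n)))
    (f := fun a => 2 * ∫⁻ x, Φ a x) (hΦ.lintegral_prod_right'.const_mul 2)
    (ENNReal.ofReal (Real.exp (12 * n)) * volume S)
  have h1 := (mul_le_mul_right (measure_mono key : gam (Fin (n * n)) {a | ∃ x, 108 * n * sqNorm x <
    sqNorm (unvec a *ᵥ x)} ≤ _) (ENNReal.ofReal (Real.exp (12 * n)) * volume S)).trans (hmk.trans hint)
  set P := gam (Fin (n * n)) {a | ∃ x, 108 * n * sqNorm x < sqNorm (unvec a *ᵥ x)} with hP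
  have h2 : ENNReal.ofReal (Real.exp (12 * n)) * P * volume S ≤
      (2 * (ENNReal.ofReal (Real.exp (n / 2)) * 3 ^ n)) * volume S := by
    calc _ = _ := by ring
      _ ≤ _ := h1
      _ = _ := by ring
  have h3 := (ENNReal.mul_le_mul_iff_left hv0 hvt).1 h2
  have h4 : (2 * (ENNReal.ofReal (Real.exp (n / 2)) * 3 ^ n)) ≤
      ENNReal.ofReal (Real.exp (12 * n)) * ENNReal.ofReal (1 / 4) := by
    have e3 : (3 : ℝ≥0∞) ^ n = ENNReal.ofReal (3 ^ n) := by
      rw [ENNReal.ofReal_pow (by norm_num)]; simp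
    have e2 : (2 : ℝ≥0∞) = ENNReal.ofReal 2 := by simp
    rw [e3, e2, ← ENNReal.ofReal_mul (by positivity), ← ENNReal.ofReal_mul (by positivity),
      ← ENNReal.ofReal_mul (by positivity)]
    refine ENNReal.ofReal_le_ofReal ?_
    have t1 : (3 : ℝ) ^ n ≤ Real.exp (2 * n) := by
      rw [mul_comm, Real.exp_nat_mul]
      gcongr
      have := Real.add_one_le_exp (2 : ℝ)
      linarith
    have t2 : (8 : ℝ) ≤ Real.exp (9 * n) := by
      have := Real.add_one_le_exp (9 * n : ℝ)
      linarith
    calc 2 * (Real.exp (n / 2) * 3 ^ n) ≤ 2 * (Real.exp (n / 2) * Real.exp (2 * n)) := by gcongr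
      _ = 8 * Real.exp (n / 2 + 2 * n) * (1 / 4) := by rw [Real.exp_add]; ring
      _ ≤ Real.exp (9 * n) * Real.exp (n / 2 + 2 * n) * (1 / 4) := by gcongr
      _ ≤ Real.exp (12 * n) * (1 / 4) := by
          rw [← Real.exp_add]
          gcongr
          linarith
  exact (ENNReal.mul_le_mul_iff_right (by simp [Real.exp_pos]) ENNReal.ofReal_ne_top).1 (h3.trans h4)

/-! ### Correct outputs reveal the planted direction -/

lemma specNorm_nonneg {m n : Type*} [Fintype m] [Fintype n] (A : Matrix m n ℝ) : 0 ≤ specNorm A := by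
  refine Real.sSup_nonneg ?_
  rintro _ ⟨x, -, rfl⟩
  exact Real.sqrt_nonneg _

lemma frobSq_nonneg {m n : Type*} [Fintype m] [Fintype n] (A : Matrix m n ℝ) : 0 ≤ frobSq A := by
  unfold frobSq; positivity

lemma sqNorm_mulVec_le_specNorm {m n : Type*} [Fintype m] [Fintype n] (A : Matrix m n ℝ) (x : n → ℝ) :
    sqNorm (A *ᵥ x) ≤ specNorm A ^ 2 * sqNorm x := by
  have hbdd : BddAbove ((fun x : n → ℝ => Real.sqrt (sqNorm (A.mulVec x))) '' {x | sqNorm x ≤ 1}) := by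
    refine ⟨√(frobSq A), ?_⟩
    rintro _ ⟨y, hy, rfl⟩
    refine Real.sqrt_le_sqrt ((sqNorm_mulVec_le_frobSq A y).trans ?_)
    exact mul_le_of_le_one_right (frobSq_nonneg A) hy
  rcases (sqNorm_nonneg x).eq_or_lt with h0 | h0
  · have := sqNorm_mulVec_le_frobSq A x
    rw [← h0] at this ⊢
    linarith
  · have h1 : sqNorm ((√(sqNorm x))⁻¹ • x) = 1 := by
      rw [sqNorm_smul, inv_pow, Real.sq_sqrt h0.le]; field_simp
    have h2 : √(sqNorm (A *ᵥ ((√(sqNorm x))⁻¹ • x))) ≤ specNorm A :=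
      le_csSup hbdd ⟨_, h1.le, rfl⟩
    have h3 := (Real.sqrt_le_left (specNorm_nonneg A)).1 h2
    rw [Matrix.mulVec_smul, sqNorm_smul, inv_pow, Real.sq_sqrt h0.le, inv_mul_eq_div,
      div_le_iff₀ h0] at h3
    exact h3

lemma specNorm_le {m n : Type*} [Fintype m] [Fintype n] (A : Matrix m n ℝ) (c : ℝ) (hc : 0 ≤ c)
    (h : ∀ x, sqNorm (A *ᵥ x) ≤ c ^ 2 * sqNorm x) : specNorm A ≤ c := by
  refine csSup_le ⟨_, 0, by simp [sqNorm], rfl⟩ ?_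
  rintro _ ⟨y, hy, rfl⟩
  refine (Real.sqrt_le_left hc).2 ((h y).trans ?_)
  exact mul_le_of_le_one_right (sq_nonneg c) hy

lemma singVal_le {m n : Type*} [Fintype m] [Fintype n] (A X : Matrix m n ℝ) (r : ℕ)
    (hX : X.rank ≤ r) : singVal A (r + 1) ≤ specNorm (A - X) := by
  refine csInf_le ⟨0, ?_⟩ ⟨X, by simpa using hX, rfl⟩
  rintro _ ⟨Y, -, rfl⟩
  exact specNorm_nonneg _

/-- Matrices of bounded Frobenius and operator norms that are strongly aligned with `v`. Correct
outputs on inputs planted with `v` are of this kind. -/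
def goodSet (n r : ℕ) (v : Fin n → ℝ) : Set (Matrix (Fin n) (Fin n) ℝ) :=
  {B | frobSq B ≤ r * (16384 * n) ∧ (∀ x, sqNorm (B *ᵥ x) ≤ 16384 * n * sqNorm x) ∧
    1024 * (n : ℝ) ^ 2 ≤ sqNorm (B *ᵥ v)}

lemma measurableSet_goodSet {X : Type*} [MeasurableSpace X] {n : ℕ} (r : ℕ) (v : Fin n → ℝ)
    (f : X → Matrix (Fin n) (Fin n) ℝ) (hf : ∀ i j, Measurable fun x => f x i j) :
    MeasurableSet {x | f x ∈ goodSet n r v} := by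
  have h1 : MeasurableSet {x | frobSq (f x) ≤ r * (16384 * n)} := by
    refine measurableSet_le ?_ measurable_const
    unfold frobSq
    exact Finset.measurable_sum _ fun i _ => Finset.measurable_sum _ fun j _ => (hf i j).pow_const 2
  have h3 : MeasurableSet {x | 1024 * (n : ℝ) ^ 2 ≤ sqNorm (f x *ᵥ v)} :=
    measurableSet_le measurable_const (measurable_sqNorm _
      (measurable_mulVec_apply _ _ hf fun _ => measurable_const))
  have h2 : MeasurableSet {x | ∀ y, sqNorm (f x *ᵥ y) ≤ 16384 * n * sqNorm y} := by
    have hc : IsClosed {B : Fin n → Fin n → ℝ | ∀ y, sqNorm (Matrix.of B *ᵥ y) ≤ 16384 * n * sqNorm y} := by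
      rw [Set.ofPred_forall]
      refine isClosed_iInter fun y => isClosed_le ?_ continuous_const
      unfold sqNorm Matrix.mulVec dotProduct
      simp only [Matrix.of_apply]
      fun_prop
    have hg : Measurable fun x => (fun i j => f x i j : Fin n → Fin n → ℝ) :=
      measurable_pi_lambda _ fun i => measurable_pi_lambda _ fun j => hf i j
    exact hg hc.measurableSet
  exact h1.inter (h2.inter h3)

/-- A fixed matrix of small Frobenius norm is unlikely to be aligned with random signs. -/
lemma avg_goodSet {n : ℕ} (hn : 0 < n) (r : ℕ) (B : Matrix (Fin n) (Fin n) ℝ) :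
    avg (fun p : Signs n => if B ∈ goodSet n r (sgn p.2) then (1 : ℝ≥0∞) else 0) ≤
      ENNReal.ofReal (Real.exp (r / 2 - n / 64)) := by
  have hn' : (0 : ℝ) < n := by exact_mod_cast hn
  rw [avg_prod]
  by_cases hB : frobSq B ≤ r * (16384 * n) ∧ (∀ x, sqNorm (B *ᵥ x) ≤ 16384 * n * sqNorm x)
  · calc _ ≤ avg (fun v : Fin n → Bool => ENNReal.ofReal (Real.exp (-(n / 64))) *
          ENNReal.ofReal (Real.exp (1 / (65536 * n) * sqNorm (B *ᵥ sgn v)))) := by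
          refine avg_mono fun v => ?_
          dsimp only
          split_ifs with hv
          · rw [avg_const, ← ENNReal.ofReal_mul (Real.exp_pos _).le, ← Real.exp_add, ← ENNReal.ofReal_one]
            refine ENNReal.ofReal_le_ofReal (Real.one_le_exp ?_)
            have h1 : 1 / (65536 * n) * (1024 * (n : ℝ) ^ 2) ≤ 1 / (65536 * n) * sqNorm (B *ᵥ sgn v) := by
              gcongr
              exact hv.2.2
            have h2 : 1 / (65536 * n) * (1024 * (n : ℝ) ^ 2) = n / 64 := by field_simp; norm_num
            linarith
          · rw [avg_const]; exact zero_le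
      _ ≤ _ := by
          rw [avg_const_mul]
          refine (mul_le_mul_right (avg_exp_quad B (16384 * n) (1 / (65536 * n)) (by positivity) hB.2
            (by positivity) (by field_simp; norm_num)) _).trans ?_
          rw [← ENNReal.ofReal_mul (Real.exp_pos _).le, ← Real.exp_add]
          refine ENNReal.ofReal_le_ofReal (Real.exp_le_exp.2 ?_)
          have h1 : 2 * (1 / (65536 * n)) * frobSq B ≤ 2 * (1 / (65536 * n)) * (r * (16384 * n)) := by
            gcongr
            exact hB.1
          have h2 : 2 * (1 / (65536 * (n : ℝ))) * (r * (16384 * n)) = r / 2 := by field_simp; ring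
          linarith
  · have : ∀ v, B ∉ goodSet n r v := fun v hv => hB ⟨hv.1, hv.2.1⟩
    simp only [this, if_false]
    rw [avg_const, avg_const]
    exact zero_le

lemma sqNorm_sub_le {ι : Type*} [Fintype ι] (x y : ι → ℝ) :
    sqNorm (x - y) ≤ 3 * sqNorm x + 3 / 2 * sqNorm y := by
  unfold sqNorm
  rw [Finset.mul_sum, Finset.mul_sum, ← Finset.sum_add_distrib]
  refine Finset.sum_le_sum fun i _ => ?_
  simp only [Pi.sub_apply]
  nlinarith [sq_nonneg (2 * x i + y i)]

lemma sqNorm_add_le {ι : Type*} [Fintype ι] (x y : ι → ℝ) :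
    sqNorm (x + y) ≤ 2 * sqNorm x + 2 * sqNorm y := by
  have := sqNorm_add_add_sub x y
  have := sqNorm_nonneg (x - y)
  linarith

/-- On inputs whose noise part is bounded, a correct output lies in the good set. -/
lemma mem_goodSet_of_success {n r : ℕ} (hr : 1 ≤ r) (β : ℝ)
    (hβn : β ^ 2 * n = 4096) (a : Fin (n * n) → ℝ) (p : Signs n)
    (hG : ∀ x, sqNorm (unvec a *ᵥ x) ≤ 108 * n * sqNorm x) (B : Matrix (Fin n) (Fin n) ℝ)
    (hBr : B.rank ≤ r)
    (hB : specNorm (unvec (a + spike β p) - B) ≤ 2 * singVal (unvec (a + spike β p)) (r + 1)) :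
    B ∈ goodSet n r (sgn p.2) := by
  set u := sgn p.1 with hu
  set v := sgn p.2 with hv
  have hun : sqNorm u = n := by rw [hu, sqNorm_sgn]; simp
  have hvn : sqNorm v = n := by rw [hv, sqNorm_sgn]; simp
  set X : Matrix (Fin n) (Fin n) ℝ := Matrix.vecMulVec (β • u) v with hX
  set A := unvec (a + spike β p) with hA
  have hAX : A = unvec a + X := by
    ext i j
    simp only [hA, hX, unvec, spike, Matrix.of_apply, Matrix.add_apply, Pi.add_apply, Pi.smul_apply,
      tensor_apply, Matrix.vecMulVec_apply, smul_eq_mul]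
    rw [← hu, ← hv]; ring
  have hXx : ∀ x, X *ᵥ x = (β * (v ⬝ᵥ x)) • u := by
    intro x
    rw [hX]
    ext i
    simp only [Matrix.mulVec, dotProduct, Matrix.vecMulVec_apply, Pi.smul_apply, smul_eq_mul,
      Finset.mul_sum, Finset.sum_mul]
    refine Finset.sum_congr rfl fun j _ => by ring
  have hn0 : (0 : ℝ) ≤ n := by positivity
  have hXs : ∀ x, sqNorm (X *ᵥ x) = 4096 * (v ⬝ᵥ x) ^ 2 := by
    intro x
    rw [hXx, sqNorm_smul, hun, ← hβn]; ring
  have hXb : ∀ x, sqNorm (X *ᵥ x) ≤ 4096 * n * sqNorm x := by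
    intro x
    have := cauchy_dot v x
    rw [hvn] at this
    rw [hXs]; linarith
  have hXr : X.rank ≤ r := (Matrix.rank_vecMulVec_le _ _).trans hr
  have hsq : √(108 * (n : ℝ)) ^ 2 = 108 * n := Real.sq_sqrt (by positivity)
  have h1 : specNorm (A - X) ≤ √(108 * n) := by
    refine specNorm_le _ _ (Real.sqrt_nonneg _) fun x => ?_
    rw [hAX, add_sub_cancel_right, hsq]
    exact hG x
  have h2 : specNorm (A - B) ≤ 2 * √(108 * n) :=
    hB.trans (by linarith [singVal_le A X r hXr])
  have h3 : ∀ x, sqNorm ((A - B) *ᵥ x) ≤ 432 * n * sqNorm x := by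
    intro x
    refine (sqNorm_mulVec_le_specNorm _ x).trans (mul_le_mul_of_nonneg_right ?_ (sqNorm_nonneg x))
    calc specNorm (A - B) ^ 2 ≤ (2 * √(108 * (n : ℝ))) ^ 2 := by
          have := specNorm_nonneg (A - B)
          gcongr
      _ = 432 * (n : ℝ) := by rw [mul_pow, hsq]; ring
  set E := unvec a - (A - B) with hE
  have hEx : ∀ x, sqNorm (E *ᵥ x) ≤ 972 * n * sqNorm x := by
    intro x
    rw [hE, Matrix.sub_mulVec]
    refine (sqNorm_sub_le _ _).trans ?_
    linarith [hG x, h3 x]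
  have hBE : B = X + E := by rw [hE, hAX]; abel
  have hop : ∀ x, sqNorm (B *ᵥ x) ≤ 16384 * n * sqNorm x := by
    intro x
    rw [hBE, Matrix.add_mulVec]
    have hx0 : 0 ≤ n * sqNorm x := mul_nonneg hn0 (sqNorm_nonneg x)
    linarith [sqNorm_add_le (X *ᵥ x) (E *ᵥ x), hXb x, hEx x]
  refine ⟨frobSq_le_of_rank B _ r hop hBr (by positivity), hop, ?_⟩
  have h4 : sqNorm (X *ᵥ v) ≤ 2 * sqNorm (B *ᵥ v) + 2 * sqNorm (E *ᵥ v) := by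
    have : X *ᵥ v = B *ᵥ v - E *ᵥ v := by rw [hBE, Matrix.add_mulVec, add_sub_cancel_right]
    rw [this]
    have h5 := sqNorm_add_add_sub (B *ᵥ v) (E *ᵥ v)
    have h6 := sqNorm_nonneg (B *ᵥ v + E *ᵥ v)
    linarith
  rw [hXs, ← sqNorm_eq_dot, hvn] at h4
  have h5 := hEx v
  rw [hvn] at h5
  nlinarith

/-! ### The round lower bound -/

/-- An algorithm succeeding with probability `3/4` on every input contradicts `final_bound`: on
the planted Gaussian input its output lies in `goodSet` with probability at least `9/16`, while
for every seed this happens with probability at most `1/4` on average. -/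
lemma no_fast_algorithm {n r k t : ℕ} (hn : 0 < n) (hr : 1 ≤ r) (hk : n ≤ k)
    {Ω : Type} [MeasurableSpace Ω] (μ : Measure Ω) [IsProbabilityMeasure μ]
    (Qf : Ω → QueryMaps (n * n) k t)
    (out : Ω → (Fin t → Fin k → ℝ) → Matrix (Fin n) (Fin n) ℝ)
    (hV : ∀ ω, (Qf ω).Valid)
    (hQ : ∀ (j : Fin t) (i : Fin k) (l : Fin (n * n)),
      Measurable fun p : Ω × (Fin (j : ℕ) → Fin k → ℝ) => Qf p.1 j p.2 i l)
    (hout : ∀ i j : Fin n,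
      Measurable fun p : Ω × (Fin t → Fin k → ℝ) => out p.1 p.2 i j)
    (hsucc : ∀ A : Matrix (Fin n) (Fin n) ℝ,
      ENNReal.ofReal (3 / 4) ≤
        μ {ω | (out ω (QueryMaps.resp (Qf ω) (_root_.vec n A))).rank ≤ r ∧
          specNorm (A - out ω (QueryMaps.resp (Qf ω) (_root_.vec n A))) ≤ 2 * singVal A (r + 1)})
    (hd : growth ^ t * ((k : ℝ) / n) + 10 + ((r : ℝ) / 2 - n / 64) ≤ 0) : False := by
  have hn' : (0 : ℝ) < n := by exact_mod_cast hn
  -- the spike `β u vᵀ` has operator norm `64 √n`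
  set β : ℝ := 64 / √n with hβdef
  have hβ : 0 < β := by positivity
  have hβn : β ^ 2 * n = 4096 := by
    rw [hβdef, div_pow, Real.sq_sqrt hn'.le]; field_simp; norm_num
  set S : Signs n → Set (Ω × (Fin (n * n) → ℝ)) := fun p =>
    {q | out q.1 (QueryMaps.resp (Qf q.1) (q.2 + spike β p)) ∈ goodSet n r (sgn p.2)} with hS
  have hSm : ∀ p, MeasurableSet (S p) := by
    intro p
    refine measurableSet_goodSet r _ (fun q : Ω × (Fin (n * n) → ℝ) =>
      out q.1 (QueryMaps.resp (Qf q.1) (q.2 + spike β p))) fun i j => ?_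
    have h1 : Measurable fun q : Ω × (Fin (n * n) → ℝ) => (q.1, q.2 + spike β p) :=
      measurable_fst.prodMk (measurable_snd.add_const _)
    have h2 := (QueryMaps.measurable_resp Qf hQ).comp h1
    exact (hout i j).comp (measurable_fst.prodMk h2)
  have hlow : ∀ p, ENNReal.ofReal (9 / 16) ≤ (μ.prod (gam (Fin (n * n)))) (S p) := by
    intro p
    rw [Measure.prod_apply_symm (hSm p)]
    set bad := toMeasurable (gam (Fin (n * n)))
      {a | ∃ x, 108 * n * sqNorm x < sqNorm (unvec a *ᵥ x)} with hbad
    have hbm : MeasurableSet bad := measurableSet_toMeasurable _ _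
    have hb : gam (Fin (n * n)) bad ≤ ENNReal.ofReal (1 / 4) := by
      rw [hbad, measure_toMeasurable]; exact gam_opNorm hn
    have hbc : ENNReal.ofReal (3 / 4) ≤ gam (Fin (n * n)) badᶜ := by
      rw [prob_compl_eq_one_sub hbm]
      refine le_trans ?_ (tsub_le_tsub_left hb 1)
      rw [← ENNReal.ofReal_one, ← ENNReal.ofReal_sub _ (by norm_num)]
      exact ENNReal.ofReal_le_ofReal (by norm_num)
    calc ENNReal.ofReal (9 / 16) = ENNReal.ofReal (3 / 4) * ENNReal.ofReal (3 / 4) := by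
          rw [← ENNReal.ofReal_mul (by norm_num)]; norm_num
      _ ≤ ENNReal.ofReal (3 / 4) * gam (Fin (n * n)) badᶜ := by gcongr
      _ = ∫⁻ _ in badᶜ, ENNReal.ofReal (3 / 4) ∂(gam (Fin (n * n))) := by
          rw [setLIntegral_const]
      _ ≤ ∫⁻ a in badᶜ, μ ((fun ω => (ω, a)) ⁻¹' S p) ∂(gam (Fin (n * n))) := by
          refine setLIntegral_mono' hbm.compl fun a ha => ?_
          have hG : ∀ x, sqNorm (unvec a *ᵥ x) ≤ 108 * n * sqNorm x := by
            intro x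
            by_contra hx
            exact ha (subset_toMeasurable _ _ ⟨x, not_le.1 hx⟩)
          refine (hsucc (unvec (a + spike β p))).trans (measure_mono ?_)
          rintro ω ⟨h1, h2⟩
          rw [vec_unvec] at h1 h2
          exact mem_goodSet_of_success hr β hβn a p hG _ h1 h2
      _ ≤ _ := setLIntegral_le_lintegral _ _
  have hup : avg (fun p => (μ.prod (gam (Fin (n * n)))) (S p)) ≤ ENNReal.ofReal (1 / 4) := by
    have h1 : avg (fun p => (μ.prod (gam (Fin (n * n)))) (S p)) =
        ∫⁻ ω, avg (fun p => gam (Fin (n * n)) (Prod.mk ω ⁻¹' S p)) ∂μ := by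
      rw [lintegral_avg μ (fun p ω => gam (Fin (n * n)) (Prod.mk ω ⁻¹' S p))
        (fun p => measurable_measure_prodMk_left (hSm p))]
      refine congrArg avg (funext fun p => ?_)
      rw [Measure.prod_apply (hSm p)]
    rw [h1]
    calc _ ≤ ∫⁻ _, ENNReal.ofReal (1 / 4) ∂μ := by
          refine lintegral_mono fun ω => ?_
          refine (hV ω).final_bound hn hk β hβ hβn
            (fun p => {h | out ω h ∈ goodSet n r (sgn p.2)}) (fun p => ?_)
            ((r : ℝ) / 2 - n / 64) (fun h => ?_) hd
          · exact measurableSet_goodSet r _ (fun h => out ω h)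
              fun i j => (hout i j).comp measurable_prodMk_left
          · refine le_trans (le_of_eq ?_) (avg_goodSet hn r (out ω h))
            refine congrArg avg (funext fun p => ?_)
            simp only [Set.indicator_apply, Set.mem_ofPred_eq]
      _ = _ := by simp
  have h := (avg_mono hlow).trans hup
  rw [avg_const] at h
  rw [ENNReal.ofReal_le_ofReal_iff (by norm_num)] at h
  norm_num at h

/-- Without measurements no algorithm distinguishes the zero matrix from `E₀₀`. -/
lemma rounds_pos {n r k t : ℕ} (hn : 0 < n) (hr : 1 ≤ r)
    {Ω : Type} [MeasurableSpace Ω] (μ : Measure Ω) [IsProbabilityMeasure μ]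
    (Qf : Ω → QueryMaps (n * n) k t)
    (out : Ω → (Fin t → Fin k → ℝ) → Matrix (Fin n) (Fin n) ℝ)
    (hout : ∀ i j : Fin n,
      Measurable fun p : Ω × (Fin t → Fin k → ℝ) => out p.1 p.2 i j)
    (hsucc : ∀ A : Matrix (Fin n) (Fin n) ℝ,
      ENNReal.ofReal (3 / 4) ≤
        μ {ω | (out ω (QueryMaps.resp (Qf ω) (_root_.vec n A))).rank ≤ r ∧
          specNorm (A - out ω (QueryMaps.resp (Qf ω) (_root_.vec n A))) ≤ 2 * singVal A (r + 1)}) :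
    1 ≤ t := by
  by_contra ht
  obtain rfl : t = 0 := by omega
  set z : Fin n := ⟨0, hn⟩
  set e : Fin n → ℝ := Pi.single z 1 with he
  have key : ∀ (A B : Matrix (Fin n) (Fin n) ℝ), A.rank ≤ r →
      specNorm (A - B) ≤ 2 * singVal A (r + 1) → B z z = A z z := by
    intro A B hA hB
    have h0 : specNorm (A - A) ≤ 0 :=
      specNorm_le _ _ le_rfl fun x => by simp [sqNorm]
    have h1 : specNorm (A - B) = 0 :=
      le_antisymm (hB.trans (by linarith [singVal_le A A r hA])) (specNorm_nonneg _)
    have h2 := sqNorm_mulVec_le_specNorm (A - B) e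
    rw [h1] at h2
    have h3 : ((A - B) *ᵥ e) z ^ 2 ≤ sqNorm ((A - B) *ᵥ e) :=
      Finset.single_le_sum (f := fun i => ((A - B) *ᵥ e) i ^ 2) (fun i _ => sq_nonneg _)
        (Finset.mem_univ z)
    have h4 : ((A - B) *ᵥ e) z = A z z - B z z := by
      rw [he, Matrix.mulVec_single_one]; rfl
    rw [h4] at h3
    have h5 : (A z z - B z z) ^ 2 = 0 := le_antisymm (by linarith) (sq_nonneg _)
    have := pow_eq_zero_iff (two_ne_zero) |>.1 h5
    linarith
  set h₀ : Fin 0 → Fin k → ℝ := fun i => i.elim0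
  have hm : ∀ x : ℝ, MeasurableSet {ω | out ω h₀ z z = x} := fun x =>
    measurableSet_eq_fun ((hout z z).comp (measurable_id.prodMk measurable_const)) measurable_const
  have hge : ∀ A : Matrix (Fin n) (Fin n) ℝ, A.rank ≤ r →
      ENNReal.ofReal (3 / 4) ≤ μ {ω | out ω h₀ z z = A z z} := by
    intro A hA
    refine (hsucc A).trans (measure_mono ?_)
    rintro ω ⟨-, h2⟩
    rw [Subsingleton.elim (QueryMaps.resp (Qf ω) (_root_.vec n A)) h₀] at h2
    exact key A _ hA h2
  have hg0 := hge 0 (by simp)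
  have hg1 := hge (Matrix.vecMulVec e e) ((Matrix.rank_vecMulVec_le _ _).trans hr)
  have hzz : Matrix.vecMulVec e e z z = 1 := by simp [Matrix.vecMulVec_apply, he]
  rw [hzz] at hg1
  have hdisj : Disjoint {ω | out ω h₀ z z = (0 : Matrix (Fin n) (Fin n) ℝ) z z}
      {ω | out ω h₀ z z = 1} := by
    rw [Set.disjoint_left]
    intro ω h1 h2
    simp only [Set.mem_ofPred_eq, Matrix.zero_apply] at h1 h2
    rw [h1] at h2
    norm_num at h2
  have hun := measure_union (μ := μ) hdisj (hm 1)
  have hle : μ ({ω | out ω h₀ z z = (0 : Matrix (Fin n) (Fin n) ℝ) z z} ∪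
      {ω | out ω h₀ z z = 1}) ≤ 1 := prob_le_one
  rw [hun] at hle
  have h := (add_le_add hg0 hg1).trans hle
  rw [← ENNReal.ofReal_add (by norm_num) (by norm_num), ← ENNReal.ofReal_one,
    ENNReal.ofReal_le_ofReal_iff (by norm_num)] at h
  norm_num at h

/-- Few rounds keep the accumulated information below the entropy of the planted signs. -/
lemma budget {n r k t : ℕ} (hn : 1280 ≤ n) (hk : n * r ≤ k) (hk0 : 0 < k)
    (hx : (65536 : ℝ) < (n : ℝ) ^ 2 / k)
    (ht : (t : ℝ) < 1 / (2 * Real.log growth) * Real.log ((n : ℝ) ^ 2 / k)) :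
    growth ^ t * ((k : ℝ) / n) + 10 + ((r : ℝ) / 2 - n / 64) ≤ 0 := by
  have hn1 : (1280 : ℝ) ≤ n := by exact_mod_cast hn
  have hn' : (0 : ℝ) < n := by linarith
  have hk' : (0 : ℝ) < k := by exact_mod_cast hk0
  have hkr : (n : ℝ) * r ≤ k := by exact_mod_cast hk
  set x : ℝ := (n : ℝ) ^ 2 / k with hxdef
  have hx0 : 0 < x := by linarith
  have hL : 0 < Real.log growth := Real.log_pos (by norm_num)
  have hg : (growth : ℝ) ^ t ≤ √x := by
    rw [← Real.log_le_log_iff (by positivity) (by positivity), Real.log_pow,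
      Real.log_sqrt hx0.le]
    rw [one_div, inv_mul_eq_div, lt_div_iff₀ (by positivity)] at ht
    linarith
  have hkn : (k : ℝ) / n = n / x := by rw [hxdef]; field_simp
  have hs : (256 : ℝ) ≤ √x := by
    rw [show (256 : ℝ) = √65536 by rw [show (65536 : ℝ) = 256 ^ 2 by norm_num]; simp]
    exact Real.sqrt_le_sqrt hx.le
  have h1 : growth ^ t * ((k : ℝ) / n) ≤ n / 256 := by
    calc growth ^ t * ((k : ℝ) / n) ≤ √x * (n / x) := by rw [hkn]; gcongr
      _ = n / √x := by
          have : x = √x * √x := (Real.mul_self_sqrt hx0.le).symm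
          rw [this]; field_simp; simp
      _ ≤ n / 256 := by gcongr
  have h2 : (r : ℝ) ≤ n / 65536 := by
    calc (r : ℝ) ≤ k / n := by rw [le_div_iff₀ hn']; linarith
      _ = n / x := hkn
      _ ≤ n / 65536 := by gcongr
  linarith

/-- Round lower bound for 2-approximate spectral norm low-rank approximation
with high success probability. -/
theorem spectral_LRA_high_prob_round_lower_bound :
    ∃ (c C : ℝ) (n₀ : ℕ), 0 < c ∧ 0 < C ∧
      ∀ (n r k t : ℕ), n₀ ≤ n → 1 ≤ r → n * r ≤ k → k ≤ n ^ 2 →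
      ∀ (Ω : Type) [MeasurableSpace Ω] (μ : Measure Ω) [IsProbabilityMeasure μ]
        (Qf : Ω → QueryMaps (n * n) k t)
        (out : Ω → (Fin t → Fin k → ℝ) → Matrix (Fin n) (Fin n) ℝ),
        (∀ ω, (Qf ω).Valid) →
        (∀ (j : Fin t) (i : Fin k) (l : Fin (n * n)),
            Measurable fun p : Ω × (Fin (j : ℕ) → Fin k → ℝ) => Qf p.1 j p.2 i l) →
        (∀ i j : Fin n,
            Measurable fun p : Ω × (Fin t → Fin k → ℝ) => out p.1 p.2 i j) →
        (∀ A : Matrix (Fin n) (Fin n) ℝ,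
            1 - ENNReal.ofReal ((n : ℝ) ^ (-C)) ≤
              μ {ω | (out ω (QueryMaps.resp (Qf ω) (vec n A))).rank ≤ r ∧
                    specNorm (A - out ω (QueryMaps.resp (Qf ω) (vec n A)))
                      ≤ 2 * singVal A (r + 1)}) →
        c * Real.log ((n : ℝ) ^ 2 / k) ≤ (t : ℝ) := by
  have hL : 0 < Real.log growth := Real.log_pos (by norm_num)
  refine ⟨1 / (2 * Real.log growth), 1, 1280, by positivity, one_pos, ?_⟩
  intro n r k t hn hr hk hkn Ω _ μ _ Qf out hV hQ hout hsucc
  have hn0 : 0 < n := by omega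
  have hnk : n ≤ k := le_trans (Nat.le_mul_of_pos_right n hr) hk
  have hk0 : 0 < k := by omega
  have hk' : (0 : ℝ) < k := by exact_mod_cast hk0
  have hn' : (1280 : ℝ) ≤ n := by exact_mod_cast hn
  have hprob : ENNReal.ofReal (3 / 4) ≤ 1 - ENNReal.ofReal ((n : ℝ) ^ (-1 : ℝ)) := by
    rw [← ENNReal.ofReal_one, ← ENNReal.ofReal_sub _ (by positivity), Real.rpow_neg_one]
    refine ENNReal.ofReal_le_ofReal ?_
    have : (n : ℝ)⁻¹ ≤ (4 : ℝ)⁻¹ := inv_anti₀ (by norm_num) (by linarith)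
    linarith
  have hsucc' := fun A => hprob.trans (hsucc A)
  have ht1 : (1 : ℝ) ≤ t := by exact_mod_cast rounds_pos hn0 hr μ Qf out hout hsucc'
  by_contra hlt
  rw [not_le] at hlt
  rcases le_or_gt ((n : ℝ) ^ 2 / k) 65536 with hx | hx
  · -- a single round already beats the bound, as `65536 ≤ growth`
    have h1 : Real.log ((n : ℝ) ^ 2 / k) ≤ Real.log growth :=
      Real.log_le_log (by positivity) (hx.trans (by norm_num))
    rw [one_div, inv_mul_eq_div, lt_div_iff₀ (by positivity)] at hlt
    nlinarith
  · exact no_fast_algorithm hn0 hr hnk μ Qf out hV hQ hout hsucc' (budget hn hk hk0 hx hlt)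

end
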